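/- Let Δ⁻ₙ = n² + 4 for integers n ≥ 1, and let h(Δ⁻ₙ) denote the order of the (wide) class group of the quadratic order of discriminant Δ⁻ₙ. Then log h(Δ⁻ₙ) = log n + o(log n) as n → ∞; that is, (log h(Δ⁻ₙ) − log n)/log n → 0 as n → ∞. -/

import Mathlib

noncomputable section

/-- A complex square root of an integer `d`. -/
def sqrtD (d : ℤ) : ℂ :=
  if 0 ≤ d then ((Real.sqrt d : ℝ) : ℂ) else Complex.I * ((Real.sqrt (-d) : ℝ) : ℂ)

/-- The element `(Δ + √Δ)/2` generating the quadratic order of discriminant `Δ`. -/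
def omegaD (d : ℤ) : ℂ := ((d : ℂ) + sqrtD d) / 2

/-- The quadratic order `O_Δ = ℤ[(Δ + √Δ)/2]` of discriminant `Δ`, as a subring of `ℂ`. -/
def QOrder (d : ℤ) : Subring ℂ := Subring.closure {omegaD d}

/-- The class number `h_Δ`: the order of the (wide) class group of `O_Δ`,
the group of invertible fractional ideals modulo principal fractional ideals. -/
def classNumber (d : ℤ) : ℕ := Nat.card (ClassGroup (QOrder d))

/-!
Every class contains a lattice ideal `ℤa + ℤ(k + ω)` with `-n - 1 ≤ k ≤ 1` and `a ∣ k² + nk - 1`, so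
the divisor bound gives `h ≤ n ^ (1 + o(1))`.

For the lower bound, let `ρ(m)` be the number of primitive ideals of norm `m` if `m` is prime to
`n² + 4`, and `0` otherwise. The fundamental unit `(n + √(n² + 4)) / 2` is only of size `n`, so an
ideal class contains at most about `X * log n / √(n² + 4)` primitive ideals of norm up to `X`, and
`∑_{m ≤ X} ρ(m) ≪ h * X * log n / n + O(√X)`. On squarefree `m` prime to `2(n² + 4)`, `ρ`
dominates the coefficients of `ζ(s) L(s, χ)`, where `χ` is the Jacobi character of `n² + 4`.
Letting `s → 1` gives `L(1, χ) ≪ h * n ^ (-1 + o(1))`, and Siegel's theorem `L(1, χ) ≫ n ^ (-ε)`,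
which is derived from Estermann's inequality, turns this into `h ≥ n ^ (1 - o(1))`.
-/

/-! ### Estermann's lower bound for the residue of a Dirichlet series -/

section Estermann

open Metric
open scoped ComplexOrder Nat

lemma one_sub_mul_geom_le_sum {b : ℕ → ℝ} (hb : 0 ≤ b) (hb0 : 1 ≤ b 0) {w : ℝ} (hw : 0 ≤ w)
    (hw1 : w ≠ 1) {M : ℕ} (hM : 0 < M) (lam : ℝ) :
    1 - lam * ((w ^ M - 1) / (w - 1)) ≤ ∑ i ∈ Finset.range M, (b i - lam) * w ^ i := by
  have hhead : b 0 * w ^ 0 ≤ ∑ i ∈ Finset.range M, b i * w ^ i :=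
    Finset.single_le_sum (f := fun i ↦ b i * w ^ i)
      (fun i _ ↦ mul_nonneg (hb i) (pow_nonneg hw i)) (Finset.mem_range.mpr hM)
  rw [← geom_sum_eq hw1, Finset.mul_sum]
  simp only [sub_mul, Finset.sum_sub_distrib]
  linarith [pow_zero w]

lemma abs_tsum_nat_add_le_of_le_geometric {c : ℕ → ℝ} {B r : ℝ} (hr : 0 ≤ r) (hr1 : r < 1)
    (hc : ∀ m, |c m| ≤ B * r ^ m) (M : ℕ) : |∑' i, c (i + M)| ≤ B * r ^ M * (1 - r)⁻¹ := by
  refine tsum_of_norm_bounded ((hasSum_geometric_of_lt_one hr hr1).mul_left (B * r ^ M))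
    fun i ↦ (Real.norm_eq_abs _).trans_le ((hc (i + M)).trans_eq ?_)
  ring

lemma exists_three_quarters_pow_le_inv {A δ : ℝ} (hA : 1 < A) (hδ : 0 ≤ δ) (hδ' : δ ≤ 1) :
    ∃ M : ℕ, 0 < M ∧ (3 / 4 : ℝ) ^ M ≤ A⁻¹ ∧ (1 + δ) ^ M ≤ 3 * A ^ (4 * δ) := by
  have hlog : 0 < Real.log A := Real.log_pos hA
  have hlower : 4 * Real.log A ≤ ⌈4 * Real.log A⌉₊ := Nat.le_ceil _
  have hupper : (⌈4 * Real.log A⌉₊ : ℝ) ≤ 4 * Real.log A + 1 :=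
    (Nat.ceil_lt_add_one (by positivity)).le
  refine ⟨⌈4 * Real.log A⌉₊, Nat.ceil_pos.mpr (by positivity), ?_, ?_⟩
  · calc (3 / 4 : ℝ) ^ ⌈4 * Real.log A⌉₊ ≤ Real.exp (-(1 / 4)) ^ ⌈4 * Real.log A⌉₊ := by
          gcongr; linarith [Real.add_one_le_exp (-(1 / 4 : ℝ))]
      _ = Real.exp (-(⌈4 * Real.log A⌉₊ / 4)) := by rw [← Real.exp_nat_mul]; congr 1; ring
      _ ≤ Real.exp (-Real.log A) := by gcongr; linarith
      _ = A⁻¹ := by rw [Real.exp_neg, Real.exp_log (by linarith)]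
  · calc (1 + δ) ^ ⌈4 * Real.log A⌉₊ ≤ Real.exp δ ^ ⌈4 * Real.log A⌉₊ := by
          gcongr; linarith [Real.add_one_le_exp δ]
      _ = Real.exp (⌈4 * Real.log A⌉₊ * δ) := by rw [← Real.exp_nat_mul]
      _ ≤ Real.exp ((4 * Real.log A + 1) * δ) := by gcongr
      _ = Real.exp δ * A ^ (4 * δ) := by
          rw [Real.rpow_def_of_pos (by linarith), ← Real.exp_add]; congr 1; ring
      _ ≤ 3 * A ^ (4 * δ) := by
          gcongr
          linarith [Real.exp_le_exp.mpr hδ', Real.exp_one_lt_d9]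

-- The nonnegative `b m` force the first `M` terms to contribute at least `1` up to a multiple of
-- `lam`, while the geometric tail beyond `M ≍ log B` contributes at most `1 / 2`.
lemma le_of_hasSum_sub_mul_pow {b : ℕ → ℝ} {δ lam B S : ℝ} (hδ : 0 < δ) (hδ' : δ ≤ 1 / 8)
    (hB : 1 ≤ B) (hb : 0 ≤ b) (hb0 : 1 ≤ b 0) (hbB : ∀ m, |b m - lam| ≤ B * (2 / 3) ^ m)
    (hS : HasSum (fun m ↦ (b m - lam) * (1 + δ) ^ m) S) (hSl : S ≤ lam / δ) :
    δ / 6 * (8 * B) ^ (-(4 * δ)) ≤ lam := by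
  obtain ⟨M, hM, hMtail, hMhead⟩ :=
    exists_three_quarters_pow_le_inv (A := 8 * B) (by linarith) hδ.le (by linarith)
  have hterm (m : ℕ) : |(b m - lam) * (1 + δ) ^ m| ≤ B * (3 / 4) ^ m := by
    rw [abs_mul, abs_of_pos (a := (1 + δ) ^ m) (by positivity)]
    calc |b m - lam| * (1 + δ) ^ m ≤ B * (2 / 3) ^ m * (1 + δ) ^ m := by gcongr; exact hbB m
      _ = B * (2 / 3 * (1 + δ)) ^ m := by rw [mul_pow, mul_assoc]
      _ ≤ B * (3 / 4) ^ m := by gcongr; linarith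
  have htail : -(1 / 2) ≤ ∑' i, (b (i + M) - lam) * (1 + δ) ^ (i + M) := by
    refine (abs_le.mp ((abs_tsum_nat_add_le_of_le_geometric (by norm_num) (by norm_num)
      hterm M).trans ?_)).1
    calc B * (3 / 4) ^ M * (1 - 3 / 4)⁻¹ ≤ B * (8 * B)⁻¹ * (1 - 3 / 4)⁻¹ := by
          gcongr
      _ = 1 / 2 := by field_simp; norm_num
  have hhead := one_sub_mul_geom_le_sum hb hb0 (w := 1 + δ) (by linarith) (by linarith) hM lam
  have hsplit := hS.summable.sum_add_tsum_nat_add M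
  rw [hS.tsum_eq] at hsplit
  have hhalf : 1 / 2 ≤ lam * ((1 + δ) ^ M / δ) := by
    have hgeom : lam * (((1 + δ) ^ M - 1) / (1 + δ - 1)) = lam * ((1 + δ) ^ M / δ) - lam / δ := by
      rw [add_sub_cancel_left]; ring
    linarith
  have hlam : 0 < lam := pos_of_mul_pos_left (by linarith) (by positivity)
  have hP : 0 < (8 * B) ^ (4 * δ) := by positivity
  rw [Real.rpow_neg (by linarith), ← div_eq_mul_inv, div_le_iff₀ hP]
  have hhalf' : 1 / 2 ≤ lam * (3 * (8 * B) ^ (4 * δ) / δ) := hhalf.trans (by gcongr)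
  calc δ / 6 = 1 / 2 * (δ / 3) := by ring
    _ ≤ lam * (3 * (8 * B) ^ (4 * δ) / δ) * (δ / 3) := by gcongr
    _ = lam * (8 * B) ^ (4 * δ) := by field_simp

/-- The real part of the `m`-th coefficient of the Taylor expansion of `f` in powers of `c - s`. -/
def reversedTaylorCoeff (f : ℂ → ℂ) (c : ℂ) (m : ℕ) : ℝ :=
  ((m ! : ℂ)⁻¹ * ((-1) ^ m * iteratedDeriv m f c)).re

lemma reversedTaylorCoeff_eq (f : ℂ → ℂ) (c : ℂ) (m : ℕ) :
    reversedTaylorCoeff f c m = (m ! : ℝ)⁻¹ * ((-1) ^ m * iteratedDeriv m f c).re := by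
  rw [reversedTaylorCoeff, ← Complex.re_ofReal_mul]
  push_cast
  rfl

lemma hasSum_reversedTaylorCoeff {f : ℂ → ℂ} (hf : Differentiable ℂ f) (c : ℂ) (x : ℝ) :
    HasSum (fun m ↦ reversedTaylorCoeff f c m * x ^ m) (f (c - x)).re := by
  convert Complex.hasSum_re (Complex.hasSum_taylorSeries_of_entire hf c (c - x)) using 2 with m
  rw [reversedTaylorCoeff, mul_comm, ← Complex.re_ofReal_mul]
  simp only [sub_sub_cancel_left, neg_pow (x : ℂ), smul_eq_mul, Complex.ofReal_pow]
  congr 1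
  ring

lemma abs_reversedTaylorCoeff_le {f : ℂ → ℂ} (hf : Differentiable ℂ f) {c : ℂ} {C R : ℝ}
    (hR : 0 < R) (hC : ∀ z ∈ sphere c R, ‖f z‖ ≤ C) (m : ℕ) :
    |reversedTaylorCoeff f c m| ≤ C / R ^ m := by
  refine (Complex.abs_re_le_norm _).trans ?_
  have hcauchy := Complex.norm_iteratedDeriv_le_of_forall_mem_sphere_norm_le m hR
    hf.diffContOnCl hC
  simp only [norm_mul, norm_inv, Complex.norm_natCast, norm_pow, norm_neg, norm_one, one_pow,
    one_mul]
  rw [inv_mul_le_iff₀ (by positivity), ← mul_div_assoc]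
  exact hcauchy

lemma differentiable_dslope {f : ℂ → ℂ} (hf : Differentiable ℂ f) (c : ℂ) :
    Differentiable ℂ (dslope f c) := by
  rw [← differentiableOn_univ, Complex.differentiableOn_dslope Filter.univ_mem]
  exact hf.differentiableOn

lemma norm_dslope_le {f : ℂ → ℂ} {c z : ℂ} {B r : ℝ} (hr : 0 < r) (hcz : r ≤ ‖z - c‖)
    (hc : ‖f c‖ ≤ B) (hz : ‖f z‖ ≤ B) : ‖dslope f c z‖ ≤ 2 * B / r := by
  have hne : z ≠ c := by
    rintro rfl
    simp only [sub_self, norm_zero] at hcz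
    linarith
  rw [dslope_of_ne _ hne, slope_def_field, norm_div]
  have hB : 0 ≤ B := (norm_nonneg _).trans hc
  gcongr
  exact (norm_sub_le _ _).trans (by linarith)

lemma norm_dslope_one_le_of_mem_sphere {f : ℂ → ℂ} {B : ℝ}
    (hf : ∀ s ∈ closedBall (2 : ℂ) (3 / 2), ‖f s‖ ≤ B) {z : ℂ}
    (hz : z ∈ sphere (2 : ℂ) (3 / 2)) : ‖dslope f 1 z‖ ≤ 4 * B := by
  have hdist : ‖z - 2‖ = 3 / 2 := by rwa [mem_sphere_iff_norm] at hz
  have htri : ‖z - 2‖ ≤ ‖z - 1‖ + ‖(1 : ℂ)‖ := by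
    simpa [sub_sub, one_add_one_eq_two] using norm_sub_le (z - 1) 1
  rw [norm_one] at htri
  convert norm_dslope_le (f := f) (c := 1) (r := 1 / 2) (by norm_num) (by linarith)
    (hf 1 (by rw [mem_closedBall_iff_norm]; norm_num)) (hf z (sphere_subset_closedBall hz))
    using 1
  ring

lemma iteratedDeriv_sub_one_inv_two (m : ℕ) :
    iteratedDeriv m (fun s : ℂ ↦ (s - 1)⁻¹) 2 = (-1) ^ m * m ! := by
  have h := congrFun (iter_deriv_inv_linear_sub (𝕜 := ℂ) m 1 1) 2
  simp only [one_mul, one_pow, mul_one] at h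
  rw [iteratedDeriv_eq_iterate, h]
  norm_num

section DirichletSeries

variable {a : ℕ → ℂ} {H : ℂ → ℂ}

lemma abscissaOfAbsConv_lt_two (hab : LSeries.abscissaOfAbsConv a ≤ 1) :
    LSeries.abscissaOfAbsConv a < ((2 : ℝ) : EReal) :=
  hab.trans_lt (by exact_mod_cast (by norm_num : (1 : ℝ) < 2))

lemma one_le_re_LSeries_two (ha : 0 ≤ a) (ha1 : 1 ≤ a 1)
    (hab : LSeries.abscissaOfAbsConv a ≤ 1) : 1 ≤ (LSeries a 2).re := by
  have hs : Summable (LSeries.term a 2) := LSeriesSummable_of_abscissaOfAbsConv_lt_re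
    (abscissaOfAbsConv_lt_two hab)
  have hle : LSeries.term a 2 1 ≤ LSeries a 2 :=
    hs.le_tsum 1 fun j _ ↦ by simpa using LSeries.term_nonneg (ha j) 2
  have hone : LSeries.term a 2 1 = a 1 := by simp
  exact (Complex.le_def.mp (ha1.trans (hone ▸ hle))).1

lemma reversedTaylorCoeff_LSeries_nonneg (ha : 0 ≤ a) {x : ℝ}
    (hx : LSeries.abscissaOfAbsConv a < x) (m : ℕ) :
    0 ≤ reversedTaylorCoeff (LSeries a) x m := by
  rw [reversedTaylorCoeff_eq]
  have h := (Complex.le_def.mp (LSeries.iteratedDeriv_alternating ha hx m)).1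
  rw [Complex.zero_re] at h
  positivity

lemma reversedTaylorCoeff_dslope (hab : LSeries.abscissaOfAbsConv a ≤ 1)
    (hHa : ∀ s : ℂ, 1 < s.re → H s = (s - 1) * LSeries a s) (m : ℕ) :
    reversedTaylorCoeff (dslope H 1) 2 m = reversedTaylorCoeff (LSeries a) 2 m - (H 1).re := by
  have hev : dslope H 1 =ᶠ[nhds 2] fun s ↦ LSeries a s - H 1 * (s - 1)⁻¹ := by
    filter_upwards [(isOpen_lt continuous_const Complex.continuous_re).mem_nhds
      (show (1 : ℝ) < (2 : ℂ).re by simp)] with s hs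
    have hs1 : s ≠ 1 := by rintro rfl; simp at hs
    have hs0 : s - 1 ≠ 0 := sub_ne_zero.mpr hs1
    rw [dslope_of_ne _ hs1, slope_def_field, hHa s hs]
    field_simp
  have hinv : ContDiffAt ℂ m (fun s : ℂ ↦ (s - 1)⁻¹) 2 :=
    (contDiffAt_id.sub contDiffAt_const).inv (by norm_num)
  have hL : ContDiffAt ℂ m (LSeries a) 2 :=
    (LSeries_analyticOnNhd a 2 (by simpa using abscissaOfAbsConv_lt_two hab)).contDiffAt
  rw [reversedTaylorCoeff, hev.iteratedDeriv_eq,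
    iteratedDeriv_fun_sub hL (contDiffAt_const.mul hinv), iteratedDeriv_const_mul _ hinv,
    iteratedDeriv_sub_one_inv_two, reversedTaylorCoeff, ← Complex.sub_re]
  have hfact : (m ! : ℂ) ≠ 0 := by exact_mod_cast m.factorial_ne_zero
  have hsign : (-1 : ℂ) ^ m * (-1) ^ m = 1 := by rw [← mul_pow]; simp
  congr 1
  field_simp
  linear_combination (-(m ! : ℂ) * H 1) * hsign

theorem estermann (ha : 0 ≤ a) (ha1 : 1 ≤ a 1) (hab : LSeries.abscissaOfAbsConv a ≤ 1)
    (hH : Differentiable ℂ H) (hHa : ∀ s : ℂ, 1 < s.re → H s = (s - 1) * LSeries a s) {B : ℝ}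
    (hB : 1 ≤ B) (hHB : ∀ s ∈ closedBall (2 : ℂ) (3 / 2), ‖H s‖ ≤ B) {δ : ℝ} (hδ : 0 < δ)
    (hδ' : δ ≤ 1 / 8) (hpos : 0 ≤ (H ((1 - δ : ℝ) : ℂ)).re) :
    δ / 6 * (32 * B) ^ (-(4 * δ)) ≤ (H 1).re := by
  have hK := differentiable_dslope hH 1
  rw [show 32 * B = 8 * (4 * B) by ring]
  refine le_of_hasSum_sub_mul_pow (b := reversedTaylorCoeff (LSeries a) 2)
    (S := (dslope H 1 (2 - ((1 + δ : ℝ) : ℂ))).re) hδ hδ' (by linarith) (fun m ↦ ?_) ?_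
    (fun m ↦ ?_) ?_ ?_
  · exact_mod_cast reversedTaylorCoeff_LSeries_nonneg ha (abscissaOfAbsConv_lt_two hab) m
  · simpa [reversedTaylorCoeff] using one_le_re_LSeries_two ha ha1 hab
  · rw [← reversedTaylorCoeff_dslope hab hHa]
    convert abs_reversedTaylorCoeff_le hK (by norm_num)
      (fun z hz ↦ norm_dslope_one_le_of_mem_sphere hHB hz) m using 1
    rw [div_eq_mul_inv _ ((3 / 2 : ℝ) ^ m), ← inv_pow, inv_div]
  · simpa only [← reversedTaylorCoeff_dslope hab hHa] using hasSum_reversedTaylorCoeff hK 2 (1 + δ)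
  · have hpoint : (2 : ℂ) - ((1 + δ : ℝ) : ℂ) = ((1 - δ : ℝ) : ℂ) := by push_cast; ring
    have hne : ((1 - δ : ℝ) : ℂ) ≠ 1 := by
      rw [← Complex.ofReal_one, Ne, Complex.ofReal_inj]
      linarith
    rw [hpoint, dslope_of_ne _ hne, slope_def_field,
      show (((1 - δ : ℝ) : ℂ) - 1) = ((-δ : ℝ) : ℂ) by push_cast; ring, Complex.div_ofReal_re,
      Complex.sub_re, div_neg, ← neg_div]
    gcongr
    linarith

end DirichletSeries

end Estermann

/-! ### Bounds for Dirichlet `L`-functions -/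

section LFunctionBounds

open DirichletCharacter Filter Asymptotics MeasureTheory Set

section CharacterSums

variable {N : ℕ}

lemma sum_range_natCast_zmod {M : Type*} [AddCommMonoid M] [NeZero N] (f : ZMod N → M) :
    ∑ k ∈ Finset.range N, f k = ∑ a, f a := by
  obtain ⟨n, rfl⟩ := Nat.exists_eq_succ_of_ne_zero (NeZero.ne N)
  exact (Fin.sum_univ_eq_sum_range (fun k ↦ f (k : ZMod (n + 1))) (n + 1)).symm.trans
    (Finset.sum_congr rfl fun i _ ↦ congrArg f (ZMod.natCast_zmod_val (n := n + 1) i))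

lemma norm_sum_range_natCast_le {E : Type*} [SeminormedAddCommGroup E] [NeZero N]
    {f : ZMod N → E} (hf : ∀ a, ‖f a‖ ≤ 1) (hsum : ∑ a, f a = 0) (n : ℕ) :
    ‖∑ k ∈ Finset.range n, f k‖ ≤ N := by
  induction n using Nat.strong_induction_on with
  | _ n ih =>
    rcases lt_or_ge n N with hn | hn
    · calc ‖∑ k ∈ Finset.range n, f k‖ ≤ ∑ _k ∈ Finset.range n, (1 : ℝ) :=
            norm_sum_le_of_le _ fun k _ ↦ hf k
        _ ≤ N := by simpa using hn.le
    · obtain ⟨m, rfl⟩ := Nat.exists_eq_add_of_le hn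
      simpa [Finset.sum_range_add, sum_range_natCast_zmod f, hsum] using
        ih m (Nat.lt_add_of_pos_left (NeZero.pos N))

/-- The partial sum `χ(1) + ⋯ + χ(n)` of the values of a Dirichlet character. -/
def charSum (χ : DirichletCharacter ℂ N) (n : ℕ) : ℂ := ∑ k ∈ Finset.Icc 1 n, χ (k : ZMod N)

lemma norm_charSum_le_self (χ : DirichletCharacter ℂ N) (n : ℕ) : ‖charSum χ n‖ ≤ n := by
  simpa [charSum] using norm_sum_le_of_le (Finset.Icc 1 n) fun k _ ↦ χ.norm_le_one (k : ZMod N)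

variable [NeZero N] {χ : DirichletCharacter ℂ N}

lemma norm_charSum_le_level (hχ : χ ≠ 1) (n : ℕ) : ‖charSum χ n‖ ≤ N := by
  have hshift : charSum χ n = ∑ k ∈ Finset.range n, χ ((k : ZMod N) + 1) := by
    rw [charSum, ← Finset.Ico_succ_right_eq_Icc, Order.succ_eq_add_one,
      Finset.range_eq_Ico, ← Finset.sum_Ico_add' (fun k : ℕ ↦ χ (k : ZMod N)) 0 n 1]
    simp
  rw [hshift]
  refine norm_sum_range_natCast_le (f := fun a ↦ χ (a + 1)) (fun a ↦ χ.norm_le_one _) ?_ n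
  rw [Fintype.sum_equiv (Equiv.addRight (1 : ZMod N)) (fun a ↦ χ (a + 1)) χ fun _ ↦ rfl]
  exact MulChar.sum_eq_zero_of_ne_one hχ

end CharacterSums

section Mellin

variable {S : ℝ → ℂ}

lemma setIntegral_Ioi_one_eq_mellin (hS0 : ∀ t < 1, S t = 0) (s : ℂ) :
    ∫ t in Ioi (1 : ℝ), S t * (t : ℂ) ^ (-(s + 1)) = mellin S (-s) := by
  rw [mellin, ← setIntegral_eq_of_subset_of_ae_sdiff_eq_zero (s := Ioi (1 : ℝ)) (t := Ioi 0)
    measurableSet_Ioi.nullMeasurableSet (Ioi_subset_Ioi zero_le_one)]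
  · refine setIntegral_congr_fun measurableSet_Ioi fun t _ ↦ ?_
    rw [smul_eq_mul, mul_comm, neg_add']
  · filter_upwards [compl_mem_ae_iff.mpr (measure_singleton (1 : ℝ))] with t ht1 ht
    rw [hS0 t (lt_of_le_of_ne (not_lt.mp ht.2) ht1), zero_mul]

lemma differentiableAt_mellin_of_norm_le {C : ℝ} (hSm : Measurable S) (hSC : ∀ t, ‖S t‖ ≤ C)
    (hS0 : ∀ t < 1, S t = 0) {s : ℂ} (hs : s.re < 0) : DifferentiableAt ℂ (mellin S) s := by
  refine mellin_differentiableAt_of_isBigO_rpow (a := 0) (b := s.re - 1) ?_ ?_ hs ?_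
    (sub_one_lt _)
  · refine ((locallyIntegrable_const C).mono hSm.aestronglyMeasurable
      (.of_forall fun t ↦ ?_)).locallyIntegrableOn _
    exact (hSC t).trans (le_abs_self C)
  · exact .of_bound C (.of_forall fun t ↦ by simpa using hSC t)
  · refine .of_bound 0 ?_
    filter_upwards [mem_nhdsWithin_of_mem_nhds (Iio_mem_nhds one_pos)] with t ht
    rw [hS0 t ht, norm_zero, zero_mul]

end Mellin

variable {N : ℕ} [NeZero N] {χ : DirichletCharacter ℂ N}

-- Both sides are holomorphic on the half plane and agree where the Dirichlet series converges.
lemma LFunction_eq_mul_integral_charSum (hχ : χ ≠ 1) {s : ℂ} (hs : 0 < s.re) :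
    LFunction χ s = s * ∫ t in Ioi (1 : ℝ), charSum χ ⌊t⌋₊ * (t : ℂ) ^ (-(s + 1)) := by
  have hSm : Measurable fun t : ℝ ↦ charSum χ ⌊t⌋₊ :=
    (measurable_from_nat (f := charSum χ)).comp Nat.measurable_floor
  have hS0 : ∀ t : ℝ, t < 1 → charSum χ ⌊t⌋₊ = 0 := fun t ht ↦ by
    simp [charSum, Nat.floor_eq_zero.mpr ht]
  have hopen : IsOpen {s : ℂ | 0 < s.re} := isOpen_lt continuous_const Complex.continuous_re
  have hmellin : DifferentiableOn ℂ (fun s ↦ s * mellin (fun t : ℝ ↦ charSum χ ⌊t⌋₊) (-s))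
      {s : ℂ | 0 < s.re} := fun z hz ↦
    (differentiableAt_id.mul ((differentiableAt_mellin_of_norm_le hSm
      (fun t ↦ norm_charSum_le_level hχ _) hS0 (by simpa using hz)).comp z
      differentiable_neg.differentiableAt)).differentiableWithinAt
  rw [setIntegral_Ioi_one_eq_mellin hS0]
  refine AnalyticOnNhd.eqOn_of_preconnected_of_eventuallyEq (𝕜 := ℂ) (z₀ := 2)
    (fun z _ ↦ (differentiable_LFunction hχ).analyticAt z) (hmellin.analyticOnNhd hopen)
    (convex_halfSpace_re_gt 0).isPreconnected (by simp) ?_ hs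
  filter_upwards [(isOpen_lt continuous_const Complex.continuous_re).mem_nhds
    (show (1 : ℝ) < (2 : ℂ).re by simp)] with z hz
  rw [LFunction_eq_LSeries χ hz, ← setIntegral_Ioi_one_eq_mellin hS0]
  refine LSeries_eq_mul_integral _ le_rfl (one_pos.trans hz) (LSeriesSummable_of_one_lt_re χ hz)
    (.of_bound N (.of_forall fun n ↦ ?_))
  simpa [charSum] using norm_charSum_le_level hχ n

lemma norm_LFunction_le_of_norm_charSum_le (hχ : χ ≠ 1) {s : ℂ} {C r : ℝ} (hr : 0 ≤ r)
    (hrs : r < s.re) (hC : ∀ n : ℕ, 1 ≤ n → ‖charSum χ n‖ ≤ C * (n : ℝ) ^ r) :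
    ‖LFunction χ s‖ ≤ ‖s‖ * (C / (s.re - r)) := by
  have hC0 : 0 ≤ C := (norm_nonneg _).trans (by simpa using hC 1 le_rfl)
  have hint : ∫ t in Ioi (1 : ℝ), C * t ^ (r - s.re - 1) = C / (s.re - r) := by
    rw [integral_const_mul, integral_Ioi_rpow_of_lt (by linarith) one_pos, Real.one_rpow,
      sub_add_cancel, ← neg_sub s.re r, neg_div_neg_eq, mul_one_div]
  rw [LFunction_eq_mul_integral_charSum hχ (hr.trans_lt hrs), norm_mul, ← hint]
  gcongr
  refine norm_integral_le_of_norm_le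
    ((integrableOn_Ioi_rpow_of_lt (by linarith) one_pos).const_mul C) ?_
  rw [ae_restrict_iff' measurableSet_Ioi]
  refine .of_forall fun t (ht : 1 < t) ↦ ?_
  have ht0 : 0 < t := one_pos.trans ht
  rw [norm_mul, Complex.norm_cpow_eq_rpow_re_of_pos ht0]
  calc ‖charSum χ ⌊t⌋₊‖ * t ^ (-(s + 1)).re
      ≤ C * (⌊t⌋₊ : ℝ) ^ r * t ^ (-(s + 1)).re := by
        gcongr; exact hC _ (Nat.le_floor (by exact_mod_cast ht.le))
    _ ≤ C * t ^ r * t ^ (-(s + 1)).re := by gcongr; exact Nat.floor_le ht0.le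
    _ = C * t ^ (r - s.re - 1) := by
        rw [mul_assoc, ← Real.rpow_add ht0, Complex.neg_re, Complex.add_re, Complex.one_re]
        ring_nf

lemma norm_LFunction_le_of_mem_closedBall (hχ : χ ≠ 1) {s : ℂ}
    (hs : s ∈ Metric.closedBall (2 : ℂ) (3 / 2)) : ‖LFunction χ s‖ ≤ 7 * N := by
  rw [mem_closedBall_iff_norm] at hs
  have hre : 1 / 2 ≤ s.re := by
    have h := (abs_le.mp ((Complex.abs_re_le_norm (s - 2)).trans hs)).1
    rw [Complex.sub_re, Complex.re_ofNat] at h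
    linarith
  have hnorm : ‖s‖ ≤ 7 / 2 := by
    have h := norm_le_norm_add_norm_sub (2 : ℂ) s
    rw [norm_sub_rev, Complex.norm_ofNat] at h
    linarith
  calc ‖LFunction χ s‖ ≤ ‖s‖ * (N / (s.re - 0)) :=
        norm_LFunction_le_of_norm_charSum_le hχ le_rfl (by linarith) fun n _ ↦ by
          simpa [charSum] using norm_charSum_le_level hχ n
    _ ≤ 7 / 2 * (N / (1 / 2)) := by rw [sub_zero]; gcongr
    _ = 7 * N := by ring

lemma norm_LFunction_one_le (hχ : χ ≠ 1) {θ : ℝ} (hθ : 0 < θ) (hθ1 : θ ≤ 1) :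
    ‖LFunction χ 1‖ ≤ (N : ℝ) ^ θ / θ := by
  have hsum (n : ℕ) (hn : 1 ≤ n) : ‖charSum χ n‖ ≤ (N : ℝ) ^ θ * (n : ℝ) ^ (1 - θ) := by
    rcases (norm_nonneg (charSum χ n)).eq_or_lt with h | h
    · rw [← h]; positivity
    calc ‖charSum χ n‖ = ‖charSum χ n‖ ^ θ * ‖charSum χ n‖ ^ (1 - θ) := by
          rw [← Real.rpow_add h, add_sub_cancel, Real.rpow_one]
      _ ≤ (N : ℝ) ^ θ * (n : ℝ) ^ (1 - θ) := by
          gcongr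
          exacts [norm_charSum_le_level hχ n, norm_charSum_le_self χ n]
  simpa using norm_LFunction_le_of_norm_charSum_le hχ (s := 1) (by linarith) (by simpa using hθ)
    hsum

end LFunctionBounds

/-! ### The coefficients of `ζ(s) L(s, χ) L(s, ψ) L(s, χψ)` -/

section DirichletCoefficients

open DirichletCharacter ArithmeticFunction
open scoped ComplexOrder

section Algebra

variable {R : Type*} [CommMonoidWithZero R] {N M : ℕ}

/-- The product `χψ` of two Dirichlet characters of possibly different levels `N` and `M`, as a
character of level `N * M`. -/
def prodChar (χ : DirichletCharacter R N) (ψ : DirichletCharacter R M) :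
    DirichletCharacter R (N * M) :=
  changeLevel (dvd_mul_right N M) χ * changeLevel (dvd_mul_left M N) ψ

lemma prodChar_natCast (χ : DirichletCharacter R N) (ψ : DirichletCharacter R M) (n : ℕ) :
    prodChar χ ψ n = χ n * ψ n := by
  rw [prodChar, MulChar.mul_apply]
  by_cases hn : IsUnit (n : ZMod (N * M))
  · obtain ⟨u, hu⟩ := hn
    rw [← hu, changeLevel_eq_cast_of_dvd, changeLevel_eq_cast_of_dvd, hu,
      ZMod.cast_natCast (dvd_mul_right N M), ZMod.cast_natCast (dvd_mul_left M N)]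
  · rw [MulChar.map_nonunit _ hn, zero_mul]
    rw [ZMod.isUnit_iff_coprime, Nat.coprime_mul_iff_right, not_and_or,
      ← ZMod.isUnit_iff_coprime, ← ZMod.isUnit_iff_coprime] at hn
    rcases hn with hN | hM
    · rw [MulChar.map_nonunit _ hN, zero_mul]
    · rw [MulChar.map_nonunit _ hM, mul_zero]

/-- A Dirichlet character as an arithmetic function (with value `0` at `0`, also for level `1`). -/
def charCoeff (χ : DirichletCharacter R N) : ArithmeticFunction R := toArithmeticFunction (χ ·)

lemma charCoeff_apply (χ : DirichletCharacter R N) {n : ℕ} (hn : n ≠ 0) : charCoeff χ n = χ n :=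
  (apply_eq_toArithmeticFunction_apply χ hn).symm

lemma charCoeff_prime_pow (χ : DirichletCharacter R N) {p : ℕ} (hp : p.Prime) (k : ℕ) :
    charCoeff χ (p ^ k) = χ p ^ k := by
  rw [charCoeff_apply _ (pow_ne_zero _ hp.ne_zero), Nat.cast_pow, map_pow]

end Algebra

lemma charCoeff_prodChar {R : Type*} [CommSemiring R] {N M : ℕ} (χ : DirichletCharacter R N)
    (ψ : DirichletCharacter R M) : charCoeff (prodChar χ ψ) = (charCoeff χ).pmul (charCoeff ψ) := by
  ext n
  rcases eq_or_ne n 0 with rfl | hn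
  · simp
  · simp [charCoeff_apply _ hn, prodChar_natCast]

lemma charCoeff_pmul_mul {R : Type*} [CommSemiring R] {N : ℕ} (χ : DirichletCharacter R N)
    (f g : ArithmeticFunction R) :
    (charCoeff χ).pmul (f * g) = (charCoeff χ).pmul f * (charCoeff χ).pmul g := by
  ext n
  rw [pmul_apply, mul_apply, mul_apply, Finset.mul_sum]
  refine Finset.sum_congr rfl fun x hx ↦ ?_
  obtain ⟨rfl, hn⟩ := Nat.mem_divisorsAntidiagonal.mp hx
  obtain ⟨h₁, h₂⟩ := mul_ne_zero_iff.mp hn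
  rw [pmul_apply, pmul_apply, charCoeff_apply _ hn, charCoeff_apply _ h₁, charCoeff_apply _ h₂,
    Nat.cast_mul, map_mul, mul_mul_mul_comm]

section Complex

variable {N M : ℕ} (χ : DirichletCharacter ℂ N) (ψ : DirichletCharacter ℂ M)

lemma isMultiplicative_charCoeff : (charCoeff χ).IsMultiplicative :=
  isMultiplicative_toArithmeticFunction χ

lemma LSeriesSummable_charCoeff {s : ℂ} (hs : 1 < s.re) : LSeriesSummable (charCoeff χ) s :=
  LSeriesSummable_of_bounded_of_one_lt_re (m := 1)
    (fun n hn ↦ charCoeff_apply χ hn ▸ norm_le_one χ n) hs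

lemma LSeries_charCoeff [NeZero N] {s : ℂ} (hs : 1 < s.re) :
    LSeries (charCoeff χ) s = LFunction χ s := by
  rw [LFunction_eq_LSeries χ hs]
  exact LSeries_congr (fun hn ↦ charCoeff_apply χ hn) s

lemma zetaMul_eq_zeta_mul_charCoeff : zetaMul χ = (zeta : ArithmeticFunction ℂ) * charCoeff χ := rfl

lemma zetaMul_prime_pow_eq_sum {p : ℕ} (hp : p.Prime) (k : ℕ) :
    zetaMul χ (p ^ k) = ∑ j ∈ Finset.range (k + 1), χ p ^ j := by
  simp only [zetaMul_eq_zeta_mul_charCoeff, coe_zeta_mul_apply, Nat.sum_divisors_prime_pow hp,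
    charCoeff_prime_pow χ hp]

lemma LSeries_zetaMul [NeZero N] {s : ℂ} (hs : 1 < s.re) :
    LSeries (zetaMul χ) s = riemannZeta s * LFunction χ s := by
  have hzeta : ⇑(zeta : ArithmeticFunction ℂ) = fun n ↦ (zeta n : ℂ) := by ext; simp
  rw [zetaMul_eq_zeta_mul_charCoeff, LSeries_mul' (hzeta ▸ LSeriesSummable_zeta_iff.mpr hs)
    (LSeriesSummable_charCoeff χ hs), LSeries_charCoeff χ hs, hzeta, LSeries_zeta_eq_riemannZeta hs]

/-- The coefficients of the Dirichlet series `ζ(s) L(s, χ) L(s, ψ) L(s, χψ)`. -/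
def zetaMulMul : ArithmeticFunction ℂ := zetaMul χ * (charCoeff ψ * charCoeff (prodChar χ ψ))

lemma zetaMulMul_eq_mul_pmul : zetaMulMul χ ψ = zetaMul χ * (charCoeff ψ).pmul (zetaMul χ) := by
  rw [zetaMulMul, zetaMul_eq_zeta_mul_charCoeff χ, charCoeff_pmul_mul, charCoeff_prodChar,
    pmul_zeta, pmul_comm (charCoeff ψ)]

lemma zetaMulMul_eq_mul_pmul' : zetaMulMul χ ψ = zetaMul ψ * (charCoeff χ).pmul (zetaMul ψ) := by
  rw [zetaMul_eq_zeta_mul_charCoeff ψ, charCoeff_pmul_mul, pmul_zeta, ← charCoeff_prodChar,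
    zetaMulMul, zetaMul_eq_zeta_mul_charCoeff, mul_mul_mul_comm]

lemma isMultiplicative_zetaMulMul : (zetaMulMul χ ψ).IsMultiplicative :=
  (isMultiplicative_zetaMul χ).mul
    ((isMultiplicative_charCoeff ψ).mul (isMultiplicative_charCoeff _))

lemma LSeriesSummable_zetaMulMul {s : ℂ} (hs : 1 < s.re) : LSeriesSummable (zetaMulMul χ ψ) s :=
  LSeriesSummable_mul (LSeriesSummable_zetaMul χ hs)
    (LSeriesSummable_mul (LSeriesSummable_charCoeff _ hs) (LSeriesSummable_charCoeff _ hs))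

lemma LSeries_zetaMulMul [NeZero N] [NeZero M] {s : ℂ} (hs : 1 < s.re) :
    LSeries (zetaMulMul χ ψ) s = riemannZeta s * LFunction χ s *
      (LFunction ψ s * LFunction (prodChar χ ψ) s) := by
  have hψ := LSeriesSummable_charCoeff ψ hs
  have hχψ := LSeriesSummable_charCoeff (prodChar χ ψ) hs
  rw [zetaMulMul, LSeries_mul' (LSeriesSummable_zetaMul χ hs) (LSeriesSummable_mul hψ hχψ),
    LSeries_mul' hψ hχψ, LSeries_zetaMul χ hs, LSeries_charCoeff ψ hs, LSeries_charCoeff _ hs]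

lemma zetaMul_mul_pmul_prime_pow_nonneg {χ : DirichletCharacter ℂ N} (hχ : χ ^ 2 = 1)
    {ψ : DirichletCharacter ℂ M} {p : ℕ} (hp : p.Prime)
    (h : ∀ j, 0 ≤ ψ p ^ j * zetaMul χ (p ^ j)) (k : ℕ) :
    0 ≤ (zetaMul χ * (charCoeff ψ).pmul (zetaMul χ)) (p ^ k) := by
  rw [mul_apply]
  refine Finset.sum_nonneg fun x hx ↦ mul_nonneg (zetaMul_nonneg hχ _) ?_
  have hx := (Nat.mem_divisorsAntidiagonal.mp hx).1
  obtain ⟨j, -, hj⟩ := (Nat.dvd_prime_pow hp).mp (Dvd.intro_left _ hx)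
  rw [pmul_apply, hj, charCoeff_prime_pow _ hp]
  exact h j

lemma eq_neg_one_of_not_nonneg {χ : DirichletCharacter ℂ N} (hχ : χ ^ 2 = 1) {a : ZMod N}
    (h : ¬ 0 ≤ χ a) : χ a = -1 := by
  rcases MulChar.isQuadratic_iff_sq_eq_one.mpr hχ a with ha | ha | ha
  · exact absurd ha.ge h
  · exact absurd (ha ▸ zero_le_one) h
  · exact ha

lemma zetaMulMul_nonneg {χ : DirichletCharacter ℂ N} (hχ : χ ^ 2 = 1)
    {ψ : DirichletCharacter ℂ M} (hψ : ψ ^ 2 = 1) : 0 ≤ (zetaMulMul χ ψ : ℕ → ℂ) := by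
  intro n
  rcases eq_or_ne n 0 with rfl | hn
  · simp
  rw [(isMultiplicative_zetaMulMul χ ψ).multiplicative_factorization _ hn]
  refine Finset.prod_nonneg fun p hp ↦ ?_
  have hp := Nat.prime_of_mem_primeFactors hp
  beta_reduce
  by_cases hψp : 0 ≤ ψ p
  · rw [zetaMulMul_eq_mul_pmul]
    exact zetaMul_mul_pmul_prime_pow_nonneg hχ hp
      (fun j ↦ mul_nonneg (pow_nonneg hψp _) (zetaMul_nonneg hχ _)) _
  by_cases hχp : 0 ≤ χ p
  · rw [zetaMulMul_eq_mul_pmul']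
    exact zetaMul_mul_pmul_prime_pow_nonneg hψ hp
      (fun j ↦ mul_nonneg (pow_nonneg hχp _) (zetaMul_nonneg hψ _)) _
  rw [zetaMulMul_eq_mul_pmul]
  refine zetaMul_mul_pmul_prime_pow_nonneg hχ hp (fun j ↦ ?_) _
  rw [zetaMul_prime_pow_eq_sum χ hp, eq_neg_one_of_not_nonneg hχ hχp,
    eq_neg_one_of_not_nonneg hψ hψp, neg_one_geom_sum]
  rcases Nat.even_or_odd j with hj | hj <;> simp [hj, hj.neg_one_pow, Nat.even_add_one]

end Complex

lemma abscissaOfAbsConv_le_one {a : ℕ → ℂ} (h : ∀ s : ℂ, 1 < s.re → LSeriesSummable a s) :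
    LSeries.abscissaOfAbsConv a ≤ 1 :=
  LSeries.abscissaOfAbsConv_le_of_forall_lt_LSeriesSummable fun y hy ↦ h y (by simpa using hy)

/-- The entire function `(s - 1) ζ(s)`, with the value `1` at `s = 1`. -/
def subOneMulZeta : ℂ → ℂ := LFunctionTrivChar₁ 1

lemma differentiable_subOneMulZeta : Differentiable ℂ subOneMulZeta :=
  differentiable_LFunctionTrivChar₁ 1

lemma subOneMulZeta_one : subOneMulZeta 1 = 1 := by simp [subOneMulZeta, LFunctionTrivChar₁]

lemma subOneMulZeta_of_ne {s : ℂ} (hs : s ≠ 1) : subOneMulZeta s = (s - 1) * riemannZeta s := by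
  rw [subOneMulZeta, LFunctionTrivChar₁, Function.update_of_ne hs, LFunctionTrivChar,
    LFunction_modOne_eq]

lemma exists_norm_subOneMulZeta_le {K : Set ℂ} (hK : IsCompact K) :
    ∃ C : ℝ, 1 ≤ C ∧ ∀ s ∈ K, ‖subOneMulZeta s‖ ≤ C := by
  obtain ⟨C, hC⟩ :=
    hK.exists_bound_of_continuousOn differentiable_subOneMulZeta.continuous.continuousOn
  exact ⟨max C 1, le_max_right _ _, fun s hs ↦ (hC s hs).trans (le_max_left _ _)⟩

end DirichletCoefficients

/-! ### Siegel's theorem -/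

section Siegel

open DirichletCharacter Filter
open scoped ComplexConjugate ComplexOrder Topology

lemma im_eq_zero_of_forall_gt_im_eq_zero {H : ℂ → ℂ} (hH : Differentiable ℂ H) {a : ℝ}
    (ha : ∀ x : ℝ, a < x → (H x).im = 0) (x : ℝ) : (H x).im = 0 := by
  have hconj : Differentiable ℂ fun z ↦ conj (H (conj z)) := fun z ↦ by
    have hz := (hH (conj z)).conj_conj
    rw [Complex.conj_conj] at hz
    exact hz
  have htendsto : Tendsto Complex.ofReal (𝓝[≠] (a + 1)) (𝓝[≠] ((a + 1 : ℝ) : ℂ)) :=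
    Complex.continuous_ofReal.continuousWithinAt.tendsto_nhdsWithin
      fun y hy ↦ Complex.ofReal_injective.ne hy
  have hreflect : H = fun z ↦ conj (H (conj z)) := by
    refine AnalyticOnNhd.eq_of_frequently_eq (z₀ := ((a + 1 : ℝ) : ℂ))
      (fun z _ ↦ hH.analyticAt z) (fun z _ ↦ hconj.analyticAt z)
      (htendsto.frequently (Eventually.frequently ?_))
    filter_upwards [mem_nhdsWithin_of_mem_nhds (Ioi_mem_nhds (lt_add_one a))] with y hy
    rw [Complex.conj_ofReal, Complex.conj_eq_iff_im.mpr (ha y hy)]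
  refine Complex.conj_eq_iff_im.mp ?_
  conv_rhs => rw [hreflect]
  simp only [Complex.conj_ofReal]

lemma le_norm_LFunction_one_of_bound {C : ℝ} (hC1 : 1 ≤ C)
    (hC : ∀ s ∈ Metric.closedBall (2 : ℂ) (3 / 2), ‖subOneMulZeta s‖ ≤ C)
    {N : ℕ} [NeZero N] {χ : DirichletCharacter ℂ N} (hχ2 : χ ^ 2 = 1) (hχ : χ ≠ 1)
    {δ : ℝ} (hδ : 0 < δ) (hδ' : δ ≤ 1 / 8)
    (hpos : 0 ≤ (subOneMulZeta (1 - δ : ℝ) * LFunction χ (1 - δ : ℝ)).re) :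
    δ / 6 * (32 * (C * 7) * N) ^ (-(4 * δ)) ≤ ‖LFunction χ 1‖ := by
  have hN : (1 : ℝ) ≤ N := by exact_mod_cast NeZero.pos N
  have hest := estermann (a := zetaMul χ) (H := fun s ↦ subOneMulZeta s * LFunction χ s)
    (B := C * (7 * N)) (fun n ↦ zetaMul_nonneg hχ2 n) (isMultiplicative_zetaMul χ).map_one.ge
    (abscissaOfAbsConv_le_one fun s hs ↦ LSeriesSummable_zetaMul χ hs)
    (differentiable_subOneMulZeta.mul (differentiable_LFunction hχ))
    (fun s hs ↦ by
      have hs1 : s ≠ 1 := by rintro rfl; simp at hs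
      rw [LSeries_zetaMul χ hs, subOneMulZeta_of_ne hs1, mul_assoc])
    (one_le_mul_of_one_le_of_one_le hC1 (by linarith))
    (fun s hs ↦ by
      rw [norm_mul]
      have := norm_LFunction_le_of_mem_closedBall hχ hs
      gcongr
      exact hC s hs)
    hδ hδ' hpos
  simp only [subOneMulZeta_one, one_mul] at hest
  calc δ / 6 * (32 * (C * 7) * N) ^ (-(4 * δ))
      = δ / 6 * (32 * (C * (7 * N))) ^ (-(4 * δ)) := by ring_nf
    _ ≤ (LFunction χ 1).re := hest
    _ ≤ ‖LFunction χ 1‖ := Complex.re_le_norm _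

lemma le_norm_LFunction_one_mul_of_bound {C : ℝ} (hC1 : 1 ≤ C)
    (hC : ∀ s ∈ Metric.closedBall (2 : ℂ) (3 / 2), ‖subOneMulZeta s‖ ≤ C)
    {N M : ℕ} [NeZero N] [NeZero M] {χ : DirichletCharacter ℂ N} {ψ : DirichletCharacter ℂ M}
    (hχ2 : χ ^ 2 = 1) (hχ : χ ≠ 1) (hψ2 : ψ ^ 2 = 1) (hψ : ψ ≠ 1) (hχψ : prodChar χ ψ ≠ 1)
    {δ : ℝ} (hδ : 0 < δ) (hδ' : δ ≤ 1 / 8) (hzero : LFunction χ (1 - δ : ℝ) = 0) :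
    δ / 6 * (32 * (C * 7 ^ 3) * N ^ 2 * M ^ 2) ^ (-(4 * δ)) ≤
      ‖LFunction χ 1‖ * (‖LFunction ψ 1‖ * ‖LFunction (prodChar χ ψ) 1‖) := by
  have hN : (1 : ℝ) ≤ N := by exact_mod_cast NeZero.pos N
  have hM : (1 : ℝ) ≤ M := by exact_mod_cast NeZero.pos M
  have hB : 1 ≤ C * (7 * N * (7 * M * (7 * (N * M : ℕ)))) := by
    have hNM : (1 : ℝ) ≤ (N * M : ℕ) := by exact_mod_cast NeZero.pos (N * M)
    exact one_le_mul_of_one_le_of_one_le hC1 <| one_le_mul_of_one_le_of_one_le (by linarith) <|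
      one_le_mul_of_one_le_of_one_le (by linarith) (by linarith)
  have hest := estermann (a := zetaMulMul χ ψ)
    (H := fun s ↦ subOneMulZeta s *
      (LFunction χ s * (LFunction ψ s * LFunction (prodChar χ ψ) s)))
    (zetaMulMul_nonneg hχ2 hψ2) (isMultiplicative_zetaMulMul χ ψ).map_one.ge
    (abscissaOfAbsConv_le_one fun s hs ↦ LSeriesSummable_zetaMulMul χ ψ hs)
    (differentiable_subOneMulZeta.mul ((differentiable_LFunction hχ).mul
      ((differentiable_LFunction hψ).mul (differentiable_LFunction hχψ))))
    (fun s hs ↦ by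
      have hs1 : s ≠ 1 := by rintro rfl; simp at hs
      rw [LSeries_zetaMulMul χ ψ hs, subOneMulZeta_of_ne hs1]
      ring)
    hB
    (fun s hs ↦ by
      rw [norm_mul, norm_mul, norm_mul]
      have hχs := norm_LFunction_le_of_mem_closedBall hχ hs
      have hψs := norm_LFunction_le_of_mem_closedBall hψ hs
      have hχψs := norm_LFunction_le_of_mem_closedBall hχψ hs
      gcongr
      exact hC s hs)
    hδ hδ' (by rw [hzero, zero_mul, mul_zero, Complex.zero_re])
  simp only [subOneMulZeta_one, one_mul] at hest
  rw [← norm_mul, ← norm_mul]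
  refine le_of_eq_of_le ?_ (hest.trans (Complex.re_le_norm _))
  push_cast
  ring_nf

lemma one_sub_mul_cpow_ne_zero {N : ℕ} (χ : DirichletCharacter ℂ N) {p : ℕ} (hp : p.Prime) {s : ℂ}
    (hs : 0 < s.re) : 1 - χ p * (p : ℂ) ^ (-s) ≠ 0 := by
  refine sub_ne_zero.mpr fun h ↦ ?_
  have hp1 : (p : ℝ) ^ (-s).re < 1 :=
    Real.rpow_lt_one_of_one_lt_of_neg (mod_cast hp.one_lt) (by simpa using hs)
  have hlt : ‖χ p * (p : ℂ) ^ (-s)‖ < 1 := by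
    rw [norm_mul, Complex.norm_natCast_cpow_of_pos hp.pos]
    exact (mul_le_of_le_one_left (by positivity) (χ.norm_le_one p)).trans_lt hp1
  rw [← h, norm_one] at hlt
  exact lt_irrefl _ hlt

lemma changeLevel_eq_of_prodChar_eq_one {R : Type*} [CommMonoidWithZero R] {N M : ℕ}
    {χ : DirichletCharacter R N} {ψ : DirichletCharacter R M} (hχ2 : χ ^ 2 = 1)
    (h : prodChar χ ψ = 1) :
    changeLevel (dvd_mul_left M N) ψ = changeLevel (dvd_mul_right N M) χ := by
  refine mul_left_cancel (a := changeLevel (dvd_mul_right N M) χ) (h.trans ?_)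
  rw [← map_mul, ← pow_two, hχ2, map_one]

lemma LFunction_eq_zero_of_prodChar_eq_one {N M : ℕ} [NeZero N] [NeZero M]
    {χ : DirichletCharacter ℂ N} {ψ : DirichletCharacter ℂ M} (hχ2 : χ ^ 2 = 1)
    (h : prodChar χ ψ = 1) {s : ℂ} (hs : 0 < s.re) (hs1 : s ≠ 1) (hzero : LFunction χ s = 0) :
    LFunction ψ s = 0 := by
  have hχ' := LFunction_changeLevel (dvd_mul_right N M) χ (s := s) (Or.inr hs1)
  have hψ' := LFunction_changeLevel (dvd_mul_left M N) ψ (s := s) (Or.inr hs1)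
  rw [changeLevel_eq_of_prodChar_eq_one hχ2 h, hχ', hzero, zero_mul] at hψ'
  refine (mul_eq_zero.mp hψ'.symm).resolve_right (Finset.prod_ne_zero_iff.mpr fun p hp ↦ ?_)
  exact one_sub_mul_cpow_ne_zero ψ (Nat.prime_of_mem_primeFactors hp) hs

lemma subOneMulZeta_mul_LFunction_nonneg {N : ℕ} [NeZero N] {χ : DirichletCharacter ℂ N}
    (hχ2 : χ ^ 2 = 1) {x : ℝ} (hx : 1 < x) : 0 ≤ subOneMulZeta x * LFunction χ x := by
  have heq : subOneMulZeta x * LFunction χ x = (x - 1 : ℝ) * LSeries (zetaMul χ) x := by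
    rw [LSeries_zetaMul χ (by simpa using hx), subOneMulZeta_of_ne (by exact_mod_cast hx.ne')]
    push_cast
    ring
  rw [heq]
  exact mul_nonneg (mod_cast (sub_pos.mpr hx).le)
    (tsum_nonneg fun n ↦ LSeries.term_nonneg (zetaMul_nonneg hχ2 n) x)

lemma re_subOneMulZeta_mul_LFunction_nonneg {N : ℕ} [NeZero N] {χ : DirichletCharacter ℂ N}
    (hχ2 : χ ^ 2 = 1) (hχ : χ ≠ 1) {x₀ : ℝ}
    (hζ : ∀ x : ℝ, x₀ ≤ x → x ≤ 1 → subOneMulZeta x ≠ 0)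
    (hL : ∀ x : ℝ, x₀ ≤ x → x < 1 → LFunction χ x ≠ 0) :
    0 ≤ (subOneMulZeta x₀ * LFunction χ x₀).re := by
  set H : ℂ → ℂ := fun s ↦ subOneMulZeta s * LFunction χ s
  have hH : Differentiable ℂ H := differentiable_subOneMulZeta.mul (differentiable_LFunction hχ)
  have hpos : ∀ x : ℝ, 1 < x → 0 ≤ H x := fun x ↦ subOneMulZeta_mul_LFunction_nonneg hχ2
  have him : ∀ x : ℝ, (H x).im = 0 :=
    im_eq_zero_of_forall_gt_im_eq_zero hH fun x hx ↦ (Complex.le_def.mp (hpos x hx)).2.symm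
  have hne : ∀ x : ℝ, x₀ ≤ x → H x ≠ 0 := by
    intro x hx
    refine mul_ne_zero ?_ ?_
    · rcases le_or_gt x 1 with hx1 | hx1
      · exact hζ x hx hx1
      · have hx1' : (x : ℂ) ≠ 1 := mod_cast hx1.ne'
        rw [subOneMulZeta_of_ne hx1']
        exact mul_ne_zero (sub_ne_zero.mpr hx1')
          (riemannZeta_ne_zero_of_one_le_re (by simpa using hx1.le))
    · rcases lt_or_ge x 1 with hx1 | hx1
      · exact hL x hx hx1
      · exact LFunction_ne_zero_of_one_le_re χ (Or.inl hχ) (by simpa using hx1)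
  by_contra! hneg
  have hcont : Continuous fun x : ℝ ↦ (H x).re :=
    Complex.continuous_re.comp (hH.continuous.comp Complex.continuous_ofReal)
  have hend : 0 ≤ (H (max x₀ 2 : ℝ)).re :=
    (Complex.le_def.mp (hpos _ (lt_max_of_lt_right one_lt_two))).1
  obtain ⟨x, hx, hx0⟩ :=
    intermediate_value_Icc (le_max_left x₀ 2) hcont.continuousOn ⟨hneg.le, hend⟩
  exact hne x hx.1 (Complex.ext hx0 (him x))

lemma rpow_neg_mul_rpow_neg_le {A x s ε : ℝ} (hA : 0 ≤ A) (hx : 1 ≤ x) (k : ℕ) (hk : k * s ≤ ε) :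
    A ^ (-s) * x ^ (-ε) ≤ (A * x ^ k) ^ (-s) := by
  have hx0 : 0 ≤ x := by linarith
  rw [Real.mul_rpow hA (by positivity), ← Real.rpow_natCast_mul hx0]
  gcongr
  linarith

lemma exists_rpow_neg_le_norm_LFunction_one_of_nonneg {ε δ : ℝ} (hδ : 0 < δ) (hδ' : δ ≤ 1 / 8)
    (hε : 4 * δ ≤ ε) : ∃ c : ℝ, 0 < c ∧ ∀ (N : ℕ) [NeZero N] (χ : DirichletCharacter ℂ N),
      χ ^ 2 = 1 → χ ≠ 1 → 0 ≤ (subOneMulZeta (1 - δ : ℝ) * LFunction χ (1 - δ : ℝ)).re →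
      c * (N : ℝ) ^ (-ε) ≤ ‖LFunction χ 1‖ := by
  obtain ⟨C, hC1, hC⟩ := exists_norm_subOneMulZeta_le (isCompact_closedBall (2 : ℂ) (3 / 2))
  refine ⟨δ / 6 * (32 * (C * 7)) ^ (-(4 * δ)), by positivity, fun N _ χ hχ2 hχ hpos ↦ ?_⟩
  refine le_trans ?_ (le_norm_LFunction_one_of_bound hC1 hC hχ2 hχ hδ hδ' hpos)
  rw [mul_assoc]
  gcongr
  simpa using rpow_neg_mul_rpow_neg_le (A := 32 * (C * 7)) (x := N) (by positivity)
    (mod_cast NeZero.pos N) 1 (by simpa using hε)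

lemma exists_rpow_neg_le_norm_LFunction_one_of_prodChar_ne_one {N₁ : ℕ} [NeZero N₁]
    {χ₁ : DirichletCharacter ℂ N₁} (hχ₁2 : χ₁ ^ 2 = 1) (hχ₁ : χ₁ ≠ 1) {ε δ : ℝ} (hδ : 0 < δ)
    (hδ' : δ ≤ 1 / 8) (hε : 16 * δ ≤ ε) (hzero : LFunction χ₁ (1 - δ : ℝ) = 0) :
    ∃ c : ℝ, 0 < c ∧ ∀ (N : ℕ) [NeZero N] (χ : DirichletCharacter ℂ N), χ ^ 2 = 1 → χ ≠ 1 →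
      prodChar χ₁ χ ≠ 1 → c * (N : ℝ) ^ (-ε) ≤ ‖LFunction χ 1‖ := by
  obtain ⟨C, hC1, hC⟩ := exists_norm_subOneMulZeta_le (isCompact_closedBall (2 : ℂ) (3 / 2))
  set θ : ℝ := min (ε / 2) 1
  have hθ : 0 < θ := lt_min (by linarith) one_pos
  set A : ℝ := δ / 6 * (32 * (C * 7 ^ 3) * N₁ ^ 2) ^ (-(4 * δ))
  have hN₁ : (0 : ℝ) < N₁ := mod_cast NeZero.pos N₁
  refine ⟨A * θ / (N₁ * (N₁ : ℝ) ^ θ), by positivity, fun N _ χ hχ2 hχ hχ₁χ ↦ ?_⟩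
  have hN : (1 : ℝ) ≤ N := by exact_mod_cast NeZero.pos N
  have hχ₁one : ‖LFunction χ₁ 1‖ ≤ N₁ := by simpa using norm_LFunction_one_le hχ₁ one_pos le_rfl
  have hprod : ‖LFunction (prodChar χ₁ χ) 1‖ ≤ (N₁ : ℝ) ^ θ * (N : ℝ) ^ (ε / 2) / θ := by
    refine (norm_LFunction_one_le hχ₁χ hθ (min_le_right _ _)).trans ?_
    rw [Nat.cast_mul, Real.mul_rpow hN₁.le (by linarith)]
    gcongr
    exact min_le_left _ _
  have hlower : A * (N : ℝ) ^ (-(ε / 2)) ≤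
      N₁ * (‖LFunction χ 1‖ * ((N₁ : ℝ) ^ θ * (N : ℝ) ^ (ε / 2) / θ)) := by
    calc A * (N : ℝ) ^ (-(ε / 2))
        ≤ δ / 6 * (32 * (C * 7 ^ 3) * N₁ ^ 2 * N ^ 2) ^ (-(4 * δ)) := by
          rw [mul_assoc]
          gcongr
          exact rpow_neg_mul_rpow_neg_le (by positivity) hN 2 (by push_cast; linarith)
      _ ≤ _ := le_norm_LFunction_one_mul_of_bound hC1 hC hχ₁2 hχ₁ hχ2 hχ hχ₁χ hδ hδ' hzero
      _ ≤ _ := by gcongr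
  have hNε : (N : ℝ) ^ (-ε) = (N : ℝ) ^ (-(ε / 2)) * ((N : ℝ) ^ (ε / 2))⁻¹ := by
    rw [← Real.rpow_neg (by linarith), ← Real.rpow_add (by linarith)]
    ring_nf
  calc A * θ / (N₁ * (N₁ : ℝ) ^ θ) * (N : ℝ) ^ (-ε)
      = A * (N : ℝ) ^ (-(ε / 2)) * (θ / (N₁ * (N₁ : ℝ) ^ θ * (N : ℝ) ^ (ε / 2))) := by
        rw [hNε]
        field_simp
    _ ≤ N₁ * (‖LFunction χ 1‖ * ((N₁ : ℝ) ^ θ * (N : ℝ) ^ (ε / 2) / θ)) *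
          (θ / (N₁ * (N₁ : ℝ) ^ θ * (N : ℝ) ^ (ε / 2))) := by gcongr
    _ = ‖LFunction χ 1‖ := by
        field_simp

lemma exists_subOneMulZeta_ne_zero :
    ∃ η : ℝ, 0 < η ∧ ∀ x : ℝ, 1 - η ≤ x → x ≤ 1 → subOneMulZeta x ≠ 0 := by
  have hne : ∀ᶠ x : ℝ in 𝓝 1, subOneMulZeta x ≠ 0 := by
    refine (differentiable_subOneMulZeta.continuous.comp
      Complex.continuous_ofReal).continuousAt.eventually_ne ?_
    simp [subOneMulZeta_one]
  obtain ⟨η, hη, hball⟩ := Metric.eventually_nhds_iff.mp hne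
  refine ⟨η / 2, by positivity, fun x hx hx1 ↦ hball ?_⟩
  rw [Real.dist_eq, abs_lt]
  constructor <;> linarith

theorem siegel {ε : ℝ} (hε : 0 < ε) : ∃ c : ℝ, 0 < c ∧ ∀ (N : ℕ) [NeZero N]
    (χ : DirichletCharacter ℂ N), χ ^ 2 = 1 → χ ≠ 1 → c * (N : ℝ) ^ (-ε) ≤ ‖LFunction χ 1‖ := by
  obtain ⟨η, hη, hζ⟩ := exists_subOneMulZeta_ne_zero
  obtain ⟨δ₀, hδ₀, hδ₀8, hδ₀η, hδ₀ε⟩ : ∃ δ : ℝ, 0 < δ ∧ δ ≤ 1 / 8 ∧ δ ≤ η ∧ δ ≤ ε / 16 :=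
    ⟨min (1 / 8) (min η (ε / 16)), by positivity, min_le_left _ _,
      (min_le_right _ _).trans (min_le_left _ _), (min_le_right _ _).trans (min_le_right _ _)⟩
  by_cases hfree : ∀ (N : ℕ) [NeZero N] (χ : DirichletCharacter ℂ N), χ ^ 2 = 1 → χ ≠ 1 →
      ∀ x : ℝ, 1 - δ₀ ≤ x → x < 1 → LFunction χ x ≠ 0
  · obtain ⟨c, hc, h⟩ :=
      exists_rpow_neg_le_norm_LFunction_one_of_nonneg hδ₀ hδ₀8 (by linarith : 4 * δ₀ ≤ ε)
    exact ⟨c, hc, fun N _ χ hχ2 hχ ↦ h N χ hχ2 hχ <| re_subOneMulZeta_mul_LFunction_nonneg hχ2 hχ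
      (fun x hx hx1 ↦ hζ x (by linarith) hx1) (hfree N χ hχ2 hχ)⟩
  · push Not at hfree
    obtain ⟨N₁, _, χ₁, hχ₁2, hχ₁, β, hβ, hβ1, hzero⟩ := hfree
    obtain ⟨δ, rfl⟩ : ∃ δ, β = 1 - δ := ⟨1 - β, by ring⟩
    have hδ : 0 < δ := by linarith
    obtain ⟨c, hc, h⟩ := exists_rpow_neg_le_norm_LFunction_one_of_nonneg hδ
      (by linarith) (by linarith : 4 * δ ≤ ε)
    obtain ⟨c', hc', h'⟩ := exists_rpow_neg_le_norm_LFunction_one_of_prodChar_ne_one hχ₁2 hχ₁ hδ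
      (by linarith) (by linarith : 16 * δ ≤ ε) hzero
    refine ⟨min c c', lt_min hc hc', fun N _ χ hχ2 hχ ↦ ?_⟩
    by_cases hprod : prodChar χ₁ χ = 1
    · have hβ0 : LFunction χ (1 - δ : ℝ) = 0 := LFunction_eq_zero_of_prodChar_eq_one hχ₁2 hprod
        (by rw [Complex.ofReal_re]; linarith) (mod_cast hβ1.ne) hzero
      refine le_trans ?_ (h N χ hχ2 hχ (by rw [hβ0, mul_zero, Complex.zero_re]))
      gcongr
      exact min_le_left _ _
    · refine le_trans ?_ (h' N χ hχ2 hχ hprod)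
      gcongr
      exact min_le_right _ _

end Siegel

/-! ### The divisor bound -/

section DivisorBound

lemma two_le_rpow_of_le {p ε : ℝ} (hε : 0 < ε) (hp : (2 : ℝ) ^ (1 / ε) ≤ p) : 2 ≤ p ^ ε :=
  calc (2 : ℝ) = ((2 : ℝ) ^ (1 / ε)) ^ ε := by
        rw [← Real.rpow_mul zero_le_two, one_div_mul_cancel hε.ne', Real.rpow_one]
    _ ≤ p ^ ε := by gcongr

lemma natCast_add_one_le_pow_rpow {p ε : ℝ} (hp : 0 ≤ p) (hpε : 2 ≤ p ^ ε) (k : ℕ) :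
    (k : ℝ) + 1 ≤ (p ^ k) ^ ε :=
  calc (k : ℝ) + 1 ≤ 2 ^ k := mod_cast Nat.lt_two_pow_self
    _ ≤ (p ^ ε) ^ k := by gcongr
    _ = (p ^ k) ^ ε := by rw [← Real.rpow_natCast_mul hp, ← Real.rpow_mul_natCast hp, mul_comm]

lemma natCast_add_one_le_mul_pow_rpow {p ε : ℝ} (hε : 0 < ε) (hp : 2 ≤ p) (k : ℕ) :
    (k : ℝ) + 1 ≤ max 1 (1 / (ε * Real.log 2)) * (p ^ k) ^ ε := by
  set K := max 1 (1 / (ε * Real.log 2))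
  have hlog : 0 < ε * Real.log 2 := mul_pos hε (Real.log_pos one_lt_two)
  have one_le_K : 1 ≤ K := le_max_left _ _
  have one_le_K_mul : 1 ≤ K * (ε * Real.log 2) := (div_le_iff₀ hlog).mp (le_max_right _ _)
  calc (k : ℝ) + 1 = k * 1 + 1 := by rw [mul_one]
    _ ≤ k * (K * (ε * Real.log 2)) + K := by gcongr
    _ = K * (k * (ε * Real.log 2) + 1) := by ring
    _ ≤ K * Real.exp (k * (ε * Real.log 2)) := by gcongr; exact Real.add_one_le_exp _
    _ = K * ((2 : ℝ) ^ k) ^ ε := by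
        rw [Real.rpow_def_of_pos (by positivity), Real.log_pow]
        ring_nf
    _ ≤ K * (p ^ k) ^ ε := by gcongr

lemma rpow_eq_prod_primeFactors {m : ℕ} (hm : m ≠ 0) (ε : ℝ) :
    (m : ℝ) ^ ε = ∏ p ∈ m.primeFactors, ((p : ℝ) ^ m.factorization p) ^ ε := by
  rw [Real.finsetProd_rpow _ _ fun p _ ↦ by positivity]
  conv_lhs =>
    rw [← Nat.prod_factorization_pow_eq_self hm, Nat.prod_factorization_eq_prod_primeFactors]
  push_cast
  rfl

theorem exists_card_divisors_le_rpow {ε : ℝ} (hε : 0 < ε) :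
    ∃ C : ℝ, 1 ≤ C ∧ ∀ m : ℕ, (m.divisors.card : ℝ) ≤ C * (m : ℝ) ^ ε := by
  set K := max 1 (1 / (ε * Real.log 2))
  have one_le_K : 1 ≤ K := le_max_left _ _
  obtain ⟨P, hP⟩ := exists_nat_ge ((2 : ℝ) ^ (1 / ε))
  refine ⟨K ^ P, one_le_pow₀ one_le_K, fun m ↦ ?_⟩
  rcases eq_or_ne m 0 with rfl | hm
  · rw [Nat.divisors_zero, Finset.card_empty, Nat.cast_zero]
    positivity
  have factor_le : ∀ p ∈ m.primeFactors, (m.factorization p : ℝ) + 1 ≤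
      (if p < P then K else 1) * ((p : ℝ) ^ m.factorization p) ^ ε := by
    intro p hp
    split_ifs with hpP
    · exact natCast_add_one_le_mul_pow_rpow hε
        (mod_cast (Nat.prime_of_mem_primeFactors hp).two_le) _
    · rw [one_mul]
      exact natCast_add_one_le_pow_rpow p.cast_nonneg
        (two_le_rpow_of_le hε (hP.trans (mod_cast not_lt.mp hpP))) _
  have prod_le : ∏ p ∈ m.primeFactors, (if p < P then K else 1) ≤ K ^ P := by
    rw [Finset.prod_ite, Finset.prod_const, Finset.prod_const_one, mul_one]
    refine pow_le_pow_right₀ one_le_K ((Finset.card_le_card (t := Finset.range P) ?_).trans_eq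
      (Finset.card_range P))
    exact fun p hp ↦ Finset.mem_range.mpr (Finset.mem_filter.mp hp).2
  calc (m.divisors.card : ℝ) = ∏ p ∈ m.primeFactors, ((m.factorization p : ℝ) + 1) := by
        rw [Nat.card_divisors hm]; push_cast; rfl
    _ ≤ ∏ p ∈ m.primeFactors, (if p < P then K else 1) * ((p : ℝ) ^ m.factorization p) ^ ε :=
        Finset.prod_le_prod (fun _ _ ↦ by positivity) factor_le
    _ = (∏ p ∈ m.primeFactors, if p < P then K else 1) * (m : ℝ) ^ ε := by
        rw [Finset.prod_mul_distrib, rpow_eq_prod_primeFactors hm]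
    _ ≤ K ^ P * (m : ℝ) ^ ε := by gcongr

end DivisorBound

/-! ### The order of discriminant `n² + 4` -/

section MetallicOrder

open scoped QuadraticAlgebra

/-- The order `ℤ[ω]` with `ω² = nω + 1`, of discriminant `n² + 4`. Its fundamental unit `ω` is
the `n`-th metallic mean. -/
abbrev MetallicOrder (n : ℕ) := QuadraticAlgebra ℤ 1 (n : ℤ)

/-- The square root of the discriminant `n² + 4`. -/
def sqrtDisc (n : ℕ) : ℝ := √((n : ℝ) ^ 2 + 4)

/-- The `n`-th metallic mean, the positive root of `X² = nX + 1`. -/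
def metallicMean (n : ℕ) : ℝ := (n + sqrtDisc n) / 2

/-- The conjugate of the `n`-th metallic mean, the negative root of `X² = nX + 1`. -/
def metallicConj (n : ℕ) : ℝ := (n - sqrtDisc n) / 2

lemma sqrtDisc_sq (n : ℕ) : sqrtDisc n ^ 2 = (n : ℝ) ^ 2 + 4 := Real.sq_sqrt (by positivity)

lemma sqrtDisc_pos (n : ℕ) : 0 < sqrtDisc n := Real.sqrt_pos.mpr (by positivity)

lemma lt_sqrtDisc (n : ℕ) : (n : ℝ) < sqrtDisc n := Real.lt_sqrt_of_sq_lt (by linarith)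

lemma sqrtDisc_le (n : ℕ) : sqrtDisc n ≤ n + 2 :=
  Real.sqrt_le_iff.mpr ⟨by positivity, by nlinarith [n.cast_nonneg (α := ℝ)]⟩

lemma metallicMean_mul_metallicConj (n : ℕ) : metallicMean n * metallicConj n = -1 := by
  simp only [metallicMean, metallicConj]
  linear_combination (-1 / 4 : ℝ) * sqrtDisc_sq n

lemma metallicMean_add_metallicConj (n : ℕ) : metallicMean n + metallicConj n = n := by
  simp only [metallicMean, metallicConj]; ring

lemma metallicMean_sub_metallicConj (n : ℕ) : metallicMean n - metallicConj n = sqrtDisc n := by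
  simp only [metallicMean, metallicConj]; ring

lemma metallicMean_mul_self (n : ℕ) : metallicMean n * metallicMean n = 1 + n * metallicMean n := by
  linear_combination metallicMean n * metallicMean_add_metallicConj n -
    metallicMean_mul_metallicConj n

lemma metallicConj_mul_self (n : ℕ) : metallicConj n * metallicConj n = 1 + n * metallicConj n := by
  linear_combination metallicConj n * metallicMean_add_metallicConj n -
    metallicMean_mul_metallicConj n

lemma metallicMean_pos (n : ℕ) : 0 < metallicMean n :=
  half_pos (add_pos_of_nonneg_of_pos n.cast_nonneg (sqrtDisc_pos n))

lemma one_lt_metallicMean (n : ℕ) [NeZero n] : 1 < metallicMean n := by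
  have one_le : (1 : ℝ) ≤ n := mod_cast NeZero.one_le
  nlinarith [metallicMean_mul_self n, metallicMean_pos n]

lemma metallicMean_le (n : ℕ) : metallicMean n ≤ n + 1 := by
  rw [metallicMean]; linarith [sqrtDisc_le n]

lemma not_isSquare_sq_add_four (n : ℕ) [NeZero n] : ¬ IsSquare ((n : ℤ) ^ 2 + 4) := by
  rintro ⟨r, hr⟩
  have one_le : (1 : ℤ) ≤ n := mod_cast NeZero.one_le
  have lt_abs : (n : ℤ) < |r| := lt_of_pow_lt_pow_left₀ 2 (abs_nonneg r) (by rw [sq_abs]; linarith)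
  have abs_lt : |r| < n + 2 := by nlinarith [sq_abs r, abs_nonneg r]
  have abs_eq : |r| = n + 1 := by omega
  have : (n + 1 : ℤ) ^ 2 = n ^ 2 + 4 := by rw [← abs_eq, sq_abs, hr, sq]
  have : 2 * (n : ℤ) = 3 := by linarith
  omega

namespace MetallicOrder

variable {n : ℕ}

lemma norm_eq (z : MetallicOrder n) :
    QuadraticAlgebra.norm z = z.re ^ 2 + n * z.re * z.im - z.im ^ 2 := by
  rw [QuadraticAlgebra.norm_def]; ring

lemma norm_mk_one (k : ℤ) :
    QuadraticAlgebra.norm (⟨k, 1⟩ : MetallicOrder n) = k ^ 2 + n * k - 1 := by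
  simp [norm_eq]

lemma intCast_norm (z : MetallicOrder n) :
    ((QuadraticAlgebra.norm z : ℤ) : MetallicOrder n) = z * star z := by
  rw [← QuadraticAlgebra.algebraMap_norm_eq_mul_star, eq_intCast]

lemma norm_eq_zero_iff [NeZero n] {z : MetallicOrder n} : QuadraticAlgebra.norm z = 0 ↔ z = 0 := by
  refine ⟨fun h ↦ ?_, fun h ↦ by rw [h, QuadraticAlgebra.norm_zero]⟩
  have complete_square : (2 * z.re + n * z.im) ^ 2 = ((n : ℤ) ^ 2 + 4) * z.im ^ 2 := by
    linear_combination 4 * (norm_eq z).symm.trans h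
  have im_eq_zero : z.im = 0 := by
    by_contra him
    obtain ⟨r, hr⟩ := (Int.pow_dvd_pow_iff two_ne_zero).mp (Dvd.intro_left _ complete_square.symm)
    refine not_isSquare_sq_add_four n ⟨r, mul_right_cancel₀ (pow_ne_zero 2 him) ?_⟩
    rw [← complete_square, hr]; ring
  refine QuadraticAlgebra.ext ?_ im_eq_zero
  simpa [norm_eq, im_eq_zero] using h

instance [NeZero n] : IsDomain (MetallicOrder n) :=
  have : NoZeroDivisors (MetallicOrder n) := ⟨fun {a b} hab ↦ by
    simpa only [← norm_eq_zero_iff, map_mul, mul_eq_zero] using hab⟩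
  NoZeroDivisors.to_isDomain _

/-- The real embedding sending `ω` to the metallic mean. -/
def embed : MetallicOrder n →ₐ[ℤ] ℝ :=
  QuadraticAlgebra.lift ⟨metallicMean n, by simpa using metallicMean_mul_self n⟩

/-- The real embedding sending `ω` to the conjugate of the metallic mean. -/
def embedConj : MetallicOrder n →ₐ[ℤ] ℝ :=
  QuadraticAlgebra.lift ⟨metallicConj n, by simpa using metallicConj_mul_self n⟩

lemma embed_apply (z : MetallicOrder n) : embed z = z.re + z.im * metallicMean n := by
  simp [embed]

lemma embedConj_apply (z : MetallicOrder n) : embedConj z = z.re + z.im * metallicConj n := by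
  simp [embedConj]

lemma embed_mul_embedConj (z : MetallicOrder n) :
    embed z * embedConj z = (QuadraticAlgebra.norm z : ℤ) := by
  rw [norm_eq, embed_apply, embedConj_apply]
  push_cast
  linear_combination (z.re * z.im : ℝ) * metallicMean_add_metallicConj n +
    (z.im ^ 2 : ℝ) * metallicMean_mul_metallicConj n

lemma embed_injective [NeZero n] : Function.Injective (embed (n := n)) :=
  (injective_iff_map_eq_zero _).mpr fun z hz ↦ norm_eq_zero_iff.mp <| by
    rw [← Int.cast_eq_zero (α := ℝ), ← embed_mul_embedConj, hz, zero_mul]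

lemma exists_omegaD_eq (n : ℕ) :
    ∃ m : ℤ, omegaD ((n : ℤ) ^ 2 + 4) = Complex.ofReal (embed (⟨m, 1⟩ : MetallicOrder n)) := by
  obtain ⟨m, hm⟩ : Even ((n : ℤ) ^ 2 - n) := by
    rw [show (n : ℤ) ^ 2 - n = (n - 1) * ((n - 1) + 1) by ring]
    exact Int.even_mul_succ_self _
  refine ⟨m + 2, ?_⟩
  have hm' : (n : ℂ) ^ 2 - n = m + m := mod_cast hm
  rw [omegaD, sqrtD, if_pos (by positivity), embed_apply, metallicMean, sqrtDisc]
  push_cast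
  linear_combination hm' / 2

lemma range_embed (n : ℕ) :
    (Complex.ofRealHom.comp (embed (n := n)).toRingHom).range = QOrder ((n : ℤ) ^ 2 + 4) := by
  obtain ⟨m, hm⟩ := exists_omegaD_eq n
  refine le_antisymm ?_ ?_
  · rintro _ ⟨z, rfl⟩
    have hz : z = z.im • ⟨m, 1⟩ + (z.re - z.im * m : ℤ) := by
      ext <;> simp
    rw [hz, map_add, map_zsmul, map_intCast]
    exact add_mem
      (zsmul_mem (Subring.subset_closure (Set.mem_singleton_iff.mpr hm.symm)) _)
      (intCast_mem _ _)
  · rw [QOrder, Subring.closure_le, Set.singleton_subset_iff]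
    exact ⟨⟨m, 1⟩, hm.symm⟩

/-- The identification of `MetallicOrder n` with the order of discriminant `n² + 4` in `ℂ`. -/
def equivQOrder (n : ℕ) [NeZero n] : MetallicOrder n ≃+* QOrder ((n : ℤ) ^ 2 + 4) :=
  (RingEquiv.ofLeftInverse
    (Function.leftInverse_invFun (Complex.ofReal_injective.comp embed_injective))).trans
    (RingEquiv.subringCongr (range_embed n))

lemma classNumber_eq_card (n : ℕ) [NeZero n] :
    classNumber ((n : ℤ) ^ 2 + 4) = Nat.card (ClassGroup (MetallicOrder n)) :=
  (Nat.card_congr (ClassGroup.mulEquiv (equivQOrder n)).toEquiv).symm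

end MetallicOrder

end MetallicOrder

/-! ### Ideal classes represented by integral ideals -/

section IdealSimilar

/-- Two ideals are similar if they become equal after multiplication by nonzero principal ideals;
on invertible ideals of a domain this is equality in the class group. -/
def IdealSimilar {R : Type*} [CommSemiring R] (I J : Ideal R) : Prop :=
  ∃ α β : R, α ≠ 0 ∧ β ≠ 0 ∧ Ideal.span {α} * I = Ideal.span {β} * J

namespace IdealSimilar

variable {R : Type*} [CommSemiring R] {I J K : Ideal R}

lemma symm (h : IdealSimilar I J) : IdealSimilar J I :=
  let ⟨α, β, hα, hβ, hIJ⟩ := h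
  ⟨β, α, hβ, hα, hIJ.symm⟩

lemma trans [NoZeroDivisors R] (hIJ : IdealSimilar I J) (hJK : IdealSimilar J K) :
    IdealSimilar I K := by
  obtain ⟨α, β, hα, hβ, hIJ⟩ := hIJ
  obtain ⟨γ, δ, hγ, hδ, hJK⟩ := hJK
  refine ⟨γ * α, β * δ, mul_ne_zero hγ hα, mul_ne_zero hβ hδ, ?_⟩
  rw [← Ideal.span_singleton_mul_span_singleton, mul_assoc, hIJ, mul_left_comm, hJK,
    ← mul_assoc, Ideal.span_singleton_mul_span_singleton]

end IdealSimilar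

open scoped nonZeroDivisors in
lemma exists_unit_coeIdeal_of_classGroup {R : Type*} [CommRing R] [IsDomain R] (c : ClassGroup R) :
    ∃ (J : (FractionalIdeal R⁰ (FractionRing R))ˣ) (I : Ideal R),
      (J : FractionalIdeal R⁰ (FractionRing R)) = I ∧ I ≠ ⊥ ∧
      ClassGroup.mk (FractionRing R) J = c := by
  refine ClassGroup.induction (FractionRing R) (fun K ↦ ?_) c
  obtain ⟨J, hJ⟩ := FractionalIdeal.isUnit_num.mpr K.isUnit
  refine ⟨J, _, hJ, ?_, ?_⟩
  · rw [← FractionalIdeal.coeIdeal_ne_zero (K := FractionRing R), ← hJ]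
    exact J.ne_zero
  · have den_ne_zero : algebraMap R (FractionRing R)
        ((K : FractionalIdeal R⁰ (FractionRing R)).den : R) ≠ 0 :=
      IsFractionRing.to_map_ne_zero_of_mem_nonZeroDivisors (SetLike.coe_mem _)
    refine (ClassGroup.mk_eq_mk.mpr ⟨Units.mk0 _ den_ne_zero, Units.ext ?_⟩).symm
    rw [hJ, Units.val_mul, coe_toPrincipalIdeal, Units.val_mk0, mul_comm]
    exact FractionalIdeal.den_mul_self_eq_num' _ _ _

end IdealSimilar

section LatticeIdeal

/-! ### Reduction theory of lattice ideals -/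

open scoped QuadraticAlgebra

namespace MetallicOrder

variable {n : ℕ} {a k : ℤ}

/-- The ideal generated by `a` and `k + ω`, which is the lattice `ℤa + ℤ(k + ω)` when `a` divides
`k² + nk - 1 = N(k + ω)`. -/
def latticeIdeal (n : ℕ) (a k : ℤ) : Ideal (MetallicOrder n) :=
  Ideal.span {(a : MetallicOrder n), ⟨k, 1⟩}

lemma latticeIdeal_eq_sup (n : ℕ) (a k : ℤ) :
    latticeIdeal n a k = Ideal.span {(a : MetallicOrder n)} ⊔ Ideal.span {⟨k, 1⟩} :=
  Ideal.span_insert _ _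

lemma mem_latticeIdeal (h : a ∣ k ^ 2 + n * k - 1) {z : MetallicOrder n} :
    z ∈ latticeIdeal n a k ↔ a ∣ z.re - k * z.im := by
  rw [latticeIdeal, Ideal.mem_span_pair]
  constructor
  · rintro ⟨x, y, rfl⟩
    obtain ⟨c, hc⟩ := h
    refine ⟨x.re - k * x.im - y.im * c, ?_⟩
    simp only [QuadraticAlgebra.re_add, QuadraticAlgebra.im_add, QuadraticAlgebra.re_mul,
      QuadraticAlgebra.im_mul, QuadraticAlgebra.re_intCast, QuadraticAlgebra.im_intCast]
    linear_combination -y.im * hc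
  · rintro ⟨t, ht⟩
    refine ⟨(t : ℤ), (z.im : ℤ), ?_⟩
    ext
    · simp; linear_combination -ht
    · simp

lemma latticeIdeal_add_mul_left (n : ℕ) (a k j : ℤ) :
    latticeIdeal n a (k + a * j) = latticeIdeal n a k := by
  have : (⟨k + a * j, 1⟩ : MetallicOrder n) = ⟨k, 1⟩ + a * j := by ext <;> simp
  rw [latticeIdeal, latticeIdeal, this, mul_comm (a : MetallicOrder n),
    Ideal.span_pair_add_mul_left]

lemma latticeIdeal_abs (n : ℕ) (a k : ℤ) : latticeIdeal n |a| k = latticeIdeal n a k := by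
  rcases abs_choice a with h | h <;> rw [h]
  rw [latticeIdeal_eq_sup, latticeIdeal_eq_sup, Int.cast_neg, Ideal.span_singleton_neg]

lemma sq_add_mul_sub_one_ne_zero [NeZero n] (k : ℤ) : k ^ 2 + n * k - 1 ≠ 0 := by
  rw [← norm_mk_one, Ne, norm_eq_zero_iff]
  exact fun h ↦ one_ne_zero (congrArg QuadraticAlgebra.im h)

lemma exists_latticeIdeal_eq_of_ne_zero (ha : a ≠ 0) (h : a ∣ k ^ 2 + n * k - 1) :
    ∃ k' : ℤ, |2 * k' + n| ≤ |a| ∧ a ∣ k' ^ 2 + n * k' - 1 ∧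
      latticeIdeal n a k' = latticeIdeal n a k := by
  set q := (2 * k + n + |a|) / (2 * |a|)
  have quot_rem := Int.mul_ediv_add_emod (2 * k + n + |a|) (2 * |a|)
  have rem_nonneg := Int.emod_nonneg (2 * k + n + |a|) (b := 2 * |a|) (by positivity)
  have rem_lt := Int.emod_lt_of_pos (2 * k + n + |a|) (b := 2 * |a|) (by positivity)
  have dvd_mul : a ∣ |a| * -q := ((dvd_abs a a).mpr dvd_rfl).mul_right _
  refine ⟨k + |a| * -q, abs_le.mpr ⟨by linarith, by linarith⟩, ?_, ?_⟩
  · rw [show (k + |a| * -q) ^ 2 + n * (k + |a| * -q) - 1 =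
      k ^ 2 + n * k - 1 + |a| * -q * (2 * k + |a| * -q + n) by ring]
    exact dvd_add h (dvd_mul.mul_right _)
  · rw [← latticeIdeal_abs, latticeIdeal_add_mul_left, latticeIdeal_abs]

lemma span_mul_latticeIdeal {c : ℤ} (h : k ^ 2 + n * k - 1 = a * c) :
    Ideal.span {(⟨-k - n, 1⟩ : MetallicOrder n)} * latticeIdeal n a k =
      Ideal.span {(a : MetallicOrder n)} * latticeIdeal n c (-k - n) := by
  have conj_mul : (⟨-k - n, 1⟩ * ⟨k, 1⟩ : MetallicOrder n) = -(a * c) := by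
    ext
    · simp; linear_combination -h
    · simp; ring
  simp only [latticeIdeal_eq_sup, Ideal.mul_sup, Ideal.span_singleton_mul_span_singleton, conj_mul,
    Ideal.span_singleton_neg]
  rw [mul_comm, sup_comm]

lemma lt_of_le_abs_sub {x d : ℤ} (hd : 0 < d) (hx : 0 ≤ x) (h : 4 * x ≤ |x - d|) : x < d := by
  rcases abs_cases (x - d) with ⟨habs, -⟩ | ⟨-, hlt⟩ <;> linarith

theorem exists_reduced_of_latticeIdeal [NeZero n] (ha : a ≠ 0) (h : a ∣ k ^ 2 + n * k - 1) :
    ∃ (k' : ℤ) (a' : ℕ), (2 * k' + n) ^ 2 < (n : ℤ) ^ 2 + 4 ∧ (a' : ℤ) ∣ k' ^ 2 + n * k' - 1 ∧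
      IdealSimilar (latticeIdeal n a k) (latticeIdeal n a' k') := by
  induction ha_abs : a.natAbs using Nat.strong_induction_on generalizing a k with
  | h m ih =>
  obtain ⟨k', hk', ⟨c, hc⟩, heq⟩ := exists_latticeIdeal_eq_of_ne_zero ha h
  have hc0 : c ≠ 0 := fun h0 ↦ sq_add_mul_sub_one_ne_zero k' (by rw [hc, h0, mul_zero])
  rcases le_or_gt |a| |c| with hac | hca
  · refine ⟨k', a.natAbs, ?_, by rw [Int.natAbs_dvd, hc]; exact dvd_mul_right _ _, 1, 1,
      one_ne_zero, one_ne_zero, by rw [Int.natCast_natAbs, latticeIdeal_abs, heq]⟩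
    refine lt_of_le_abs_sub (by positivity) (sq_nonneg _) ?_
    calc 4 * (2 * k' + n) ^ 2 ≤ 4 * (|a| * |c|) := by
          nlinarith [abs_nonneg (2 * k' + (n : ℤ)), sq_abs (2 * k' + (n : ℤ)), abs_nonneg a]
      _ = |(2 * k' + n) ^ 2 - ((n : ℤ) ^ 2 + 4)| := by
          rw [← abs_mul, ← hc, show (2 * k' + n) ^ 2 - ((n : ℤ) ^ 2 + 4) =
            4 * (k' ^ 2 + n * k' - 1) by ring, abs_mul]
          rfl
  · obtain ⟨k₁, a₁, hk₁, ha₁, hsim⟩ := ih c.natAbs (by zify at ha_abs ⊢; omega)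
      (k := -k' - n) hc0
      ⟨a, by linear_combination hc⟩ rfl
    refine ⟨k₁, a₁, hk₁, ha₁, IdealSimilar.trans
      ⟨⟨-k' - n, 1⟩, a, ?_, Int.cast_ne_zero.mpr ha, ?_⟩ hsim⟩
    · exact fun h0 ↦ one_ne_zero (congrArg QuadraticAlgebra.im h0)
    · rw [← heq, span_mul_latticeIdeal hc]

lemma exists_intCast_mem_iff_dvd [NeZero n] {I : Ideal (MetallicOrder n)} (hI : I ≠ ⊥) :
    ∃ m : ℤ, m ≠ 0 ∧ ∀ x : ℤ, (x : MetallicOrder n) ∈ I ↔ m ∣ x := by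
  have mem_iff (x : ℤ) : (x : MetallicOrder n) ∈ I ↔ _ ∣ x :=
    (Submodule.IsPrincipal.mem_iff_generator_dvd (I.comap (Int.castRingHom (MetallicOrder n))))
  refine ⟨_, fun h0 ↦ ?_, mem_iff⟩
  obtain ⟨z, hz, hz0⟩ := Submodule.exists_mem_ne_zero_of_ne_bot hI
  refine hz0 (norm_eq_zero_iff.mp (zero_dvd_iff.mp (h0 ▸ (mem_iff _).mp ?_)))
  rw [intCast_norm]
  exact I.mul_mem_right _ hz

lemma exists_im_eq_iff_dvd (I : Ideal (MetallicOrder n)) :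
    ∃ q : ℤ, ∀ y : ℤ, (∃ z ∈ I, z.im = y) ↔ q ∣ y :=
  ⟨_, fun _ ↦ Submodule.IsPrincipal.mem_iff_generator_dvd
    ((I.restrictScalars ℤ).map (QuadraticAlgebra.imₗ 1 (n : ℤ)))⟩

lemma exists_eq_span_mul_latticeIdeal [NeZero n] {I : Ideal (MetallicOrder n)} (hI : I ≠ ⊥) :
    ∃ q a k : ℤ, q ≠ 0 ∧ a ≠ 0 ∧ a ∣ k ^ 2 + n * k - 1 ∧
      I = Ideal.span {(q : MetallicOrder n)} * latticeIdeal n a k := by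
  obtain ⟨m, m_ne_zero, mem_int⟩ := exists_intCast_mem_iff_dvd hI
  obtain ⟨q, mem_im⟩ := exists_im_eq_iff_dvd I
  have omega_mul_im (z : MetallicOrder n) : (ω * z).im = z.re + n * z.im := by simp
  have m_mem : (m : MetallicOrder n) ∈ I := (mem_int _).mpr dvd_rfl
  obtain ⟨a, ha⟩ : q ∣ m := (mem_im _).mp ⟨_, I.mul_mem_left ω m_mem, by simp⟩
  obtain ⟨g, hgI, hg⟩ := (mem_im _).mpr dvd_rfl
  obtain ⟨k, hk⟩ : q ∣ g.re := by
    rw [← dvd_add_left (Dvd.intro_left (n : ℤ) rfl), ← hg, ← omega_mul_im, hg]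
    exact (mem_im _).mp ⟨_, I.mul_mem_left ω hgI, rfl⟩
  have q_ne_zero : q ≠ 0 := left_ne_zero_of_mul (ha ▸ m_ne_zero)
  have hgk : g = q * ⟨k, 1⟩ := by ext <;> simp [hk, hg]
  refine ⟨q, a, k, q_ne_zero, right_ne_zero_of_mul (ha ▸ m_ne_zero), ?_, le_antisymm ?_ ?_⟩
  · refine Int.dvd_of_mul_dvd_mul_left q_ne_zero (ha ▸ (mem_int _).mp ?_)
    rw [← norm_mk_one, Int.cast_mul, intCast_norm, ← mul_assoc, ← hgk]
    exact I.mul_mem_right _ hgI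
  · intro z hz
    obtain ⟨y, hy⟩ : q ∣ z.im := (mem_im _).mp ⟨z, hz, rfl⟩
    have sub_eq : z - y * g = (z.re - y * (q * k) : ℤ) := by
      ext <;> simp [hk, hg, hy, mul_comm]
    obtain ⟨t, ht⟩ := (mem_int _).mp (sub_eq ▸ I.sub_mem hz (I.mul_mem_left _ hgI))
    refine Ideal.mem_span_singleton_mul.mpr ⟨a * t + y * ⟨k, 1⟩, ?_, ?_⟩
    · exact add_mem (Ideal.mul_mem_right _ _ (Ideal.subset_span (by simp)))
        (Ideal.mul_mem_left _ _ (Ideal.subset_span (by simp)))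
    · rw [← sub_add_cancel z (y * g), sub_eq, ht, ha, hgk]
      push_cast
      ring
  · rw [latticeIdeal_eq_sup, Ideal.mul_sup, Ideal.span_singleton_mul_span_singleton,
      Ideal.span_singleton_mul_span_singleton, ← hgk, ← Int.cast_mul, ← ha]
    exact sup_le ((Ideal.span_singleton_le_iff_mem I).mpr m_mem)
      ((Ideal.span_singleton_le_iff_mem I).mpr hgI)

theorem exists_reduced_similar [NeZero n] {I : Ideal (MetallicOrder n)} (hI : I ≠ ⊥) :
    ∃ (k : ℤ) (a : ℕ), (2 * k + n) ^ 2 < (n : ℤ) ^ 2 + 4 ∧ (a : ℤ) ∣ k ^ 2 + n * k - 1 ∧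
      IdealSimilar I (latticeIdeal n a k) := by
  obtain ⟨q, a, k, hq, ha, h, rfl⟩ := exists_eq_span_mul_latticeIdeal hI
  obtain ⟨k', a', hk', ha', hsim⟩ := exists_reduced_of_latticeIdeal ha h
  refine ⟨k', a', hk', ha',
    IdealSimilar.trans ⟨1, q, one_ne_zero, Int.cast_ne_zero.mpr hq, ?_⟩ hsim⟩
  rw [Ideal.span_singleton_one, Ideal.top_mul]

end MetallicOrder

end LatticeIdeal

/-! ### The upper bound for the class number -/

section UpperBound

namespace MetallicOrder

variable {n : ℕ}

/-- A finite set containing the parameters `(k, a)` of all lattice ideals produced by the reduction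
theory `exists_reduced_similar`. -/
def reducedParams (n : ℕ) : Finset (Σ _ : ℤ, ℕ) :=
  (Finset.Icc (-(n : ℤ) - 1) 1).sigma fun k ↦ (k ^ 2 + n * k - 1).natAbs.divisors

lemma mem_reducedParams [NeZero n] {k : ℤ} {a : ℕ} (hk : (2 * k + n) ^ 2 < (n : ℤ) ^ 2 + 4)
    (ha : (a : ℤ) ∣ k ^ 2 + n * k - 1) : ⟨k, a⟩ ∈ reducedParams n := by
  have lower : -(n : ℤ) - 1 ≤ k := by nlinarith
  have upper : k ≤ 1 := by nlinarith
  rw [reducedParams, Finset.mem_sigma, Finset.mem_Icc, Nat.mem_divisors]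
  exact ⟨⟨lower, upper⟩, Int.natCast_dvd.mp ha,
    Int.natAbs_ne_zero.mpr (sq_add_mul_sub_one_ne_zero k)⟩

lemma exists_injective_reducedParams (n : ℕ) [NeZero n] :
    ∃ f : ClassGroup (MetallicOrder n) → reducedParams n, Function.Injective f := by
  have exists_params (c : ClassGroup (MetallicOrder n)) := exists_unit_coeIdeal_of_classGroup c
  choose J I hJ hI hc using exists_params
  choose k a hk ha hsim using fun c ↦ exists_reduced_similar (hI c)
  refine ⟨fun c ↦ ⟨⟨k c, a c⟩, mem_reducedParams (hk c) (ha c)⟩, fun c c' hcc' ↦ ?_⟩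
  obtain ⟨hk_eq, ha_eq⟩ : k c = k c' ∧ a c = a c' := by simpa using hcc'
  obtain ⟨α, β, hα, hβ, h⟩ := (hsim c).trans (hk_eq ▸ ha_eq ▸ (hsim c').symm)
  rw [← hc c, ← hc c', ClassGroup.mk_eq_mk_of_coe_ideal (hJ c) (hJ c')]
  exact ⟨α, β, hα, hβ, h⟩

instance [NeZero n] : Finite (ClassGroup (MetallicOrder n)) :=
  let ⟨_, hf⟩ := exists_injective_reducedParams n
  .of_injective _ hf

lemma card_classGroup_le (n : ℕ) [NeZero n] :
    Nat.card (ClassGroup (MetallicOrder n)) ≤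
      ∑ k ∈ Finset.Icc (-(n : ℤ) - 1) 1, (k ^ 2 + n * k - 1).natAbs.divisors.card := by
  obtain ⟨f, hf⟩ := exists_injective_reducedParams n
  refine (Nat.card_le_card_of_injective f hf).trans_eq ?_
  rw [Nat.card_eq_fintype_card, Fintype.card_coe, reducedParams, Finset.card_sigma]

end MetallicOrder

lemma abs_sq_add_mul_sub_one_le {n : ℕ} [NeZero n] {k : ℤ}
    (hk : k ∈ Finset.Icc (-(n : ℤ) - 1) 1) :
    |k ^ 2 + n * k - 1| ≤ 4 * (n : ℤ) ^ 2 := by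
  obtain ⟨hlower, hupper⟩ := Finset.mem_Icc.mp hk
  have one_le : (1 : ℤ) ≤ n := mod_cast NeZero.one_le
  exact abs_le.mpr ⟨by nlinarith, by nlinarith⟩

theorem exists_classNumber_le_rpow {ε : ℝ} (hε : 0 < ε) :
    ∃ C : ℝ, 0 < C ∧ ∀ (n : ℕ) [NeZero n],
      (classNumber ((n : ℤ) ^ 2 + 4) : ℝ) ≤ C * (n : ℝ) ^ (1 + ε) := by
  obtain ⟨C, hC1, hC⟩ := exists_card_divisors_le_rpow (half_pos hε)
  have : 0 < C := one_pos.trans_le hC1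
  refine ⟨4 * (C * (4 : ℝ) ^ (ε / 2)), by positivity, fun n _ ↦ ?_⟩
  have one_le : (1 : ℝ) ≤ n := mod_cast NeZero.one_le
  have term_le : ∀ k ∈ Finset.Icc (-(n : ℤ) - 1) 1,
      ((k ^ 2 + n * k - 1).natAbs.divisors.card : ℝ) ≤ C * (4 : ℝ) ^ (ε / 2) * (n : ℝ) ^ ε := by
    intro k hk
    have natAbs_le : ((k ^ 2 + n * k - 1).natAbs : ℝ) ≤ 4 * (n : ℝ) ^ 2 := by
      rw [Nat.cast_natAbs]
      exact_mod_cast abs_sq_add_mul_sub_one_le hk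
    calc ((k ^ 2 + n * k - 1).natAbs.divisors.card : ℝ) ≤ C * (4 * (n : ℝ) ^ 2) ^ (ε / 2) :=
          (hC _).trans (by gcongr)
      _ = C * (4 : ℝ) ^ (ε / 2) * (n : ℝ) ^ ε := by
          rw [Real.mul_rpow (by positivity) (by positivity),
            ← Real.rpow_natCast_mul (by positivity), Nat.cast_ofNat,
            mul_div_cancel₀ ε two_ne_zero, mul_assoc]
  have card_Icc : ((Finset.Icc (-(n : ℤ) - 1) 1).card : ℝ) = n + 3 := by
    rw [Int.card_Icc, show (1 + 1 - (-(n : ℤ) - 1)).toNat = n + 3 by omega]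
    push_cast
    rfl
  calc (classNumber ((n : ℤ) ^ 2 + 4) : ℝ)
      ≤ ∑ k ∈ Finset.Icc (-(n : ℤ) - 1) 1, ((k ^ 2 + n * k - 1).natAbs.divisors.card : ℝ) := by
        rw [MetallicOrder.classNumber_eq_card]
        exact_mod_cast MetallicOrder.card_classGroup_le n
    _ ≤ (n + 3) * (C * (4 : ℝ) ^ (ε / 2) * (n : ℝ) ^ ε) := by
        rw [← card_Icc, ← nsmul_eq_mul]
        exact Finset.sum_le_card_nsmul _ _ _ term_le
    _ ≤ (4 * n) * (C * (4 : ℝ) ^ (ε / 2) * (n : ℝ) ^ ε) := by gcongr; linarith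
    _ = 4 * (C * (4 : ℝ) ^ (ε / 2)) * (n : ℝ) ^ (1 + ε) := by
        rw [Real.rpow_add (by linarith), Real.rpow_one]; ring

end UpperBound

/-! ### Ideals with a norm, and the class of an invertible ideal -/

section ConjugateIdeal

open scoped nonZeroDivisors in
lemma isUnit_coeIdeal_of_mul_eq_span_singleton {R : Type*} [CommRing R] [IsDomain R]
    {I J : Ideal R} {a : R} (ha : a ≠ 0) (h : I * J = Ideal.span {a}) :
    IsUnit (I : FractionalIdeal R⁰ (FractionRing R)) := by
  have ha' : algebraMap R (FractionRing R) a ≠ 0 := by simpa using ha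
  refine isUnit_of_mul_isUnit_left (y := (J : FractionalIdeal R⁰ (FractionRing R))) ?_
  rw [← FractionalIdeal.coeIdeal_mul, h, FractionalIdeal.coeIdeal_span_singleton]
  refine .of_mul_eq_one (FractionalIdeal.spanSingleton _ (algebraMap R (FractionRing R) a)⁻¹) ?_
  rw [FractionalIdeal.spanSingleton_mul_spanSingleton, mul_inv_cancel₀ ha',
    FractionalIdeal.spanSingleton_one]

open scoped nonZeroDivisors in
lemma exists_classGroup_map (R : Type*) [CommRing R] [IsDomain R] :
    ∃ cls : Ideal R → ClassGroup R, ∀ I J : Ideal R,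
      IsUnit (I : FractionalIdeal R⁰ (FractionRing R)) →
      IsUnit (J : FractionalIdeal R⁰ (FractionRing R)) → cls I = cls J → IdealSimilar I J := by
  classical
  refine ⟨fun I ↦ if h : IsUnit (I : FractionalIdeal R⁰ (FractionRing R)) then
    ClassGroup.mk (FractionRing R) h.unit else 1, fun I J hI hJ hIJ ↦ ?_⟩
  simp only [dif_pos hI, dif_pos hJ] at hIJ
  rwa [ClassGroup.mk_eq_mk_of_coe_ideal hI.unit_spec hJ.unit_spec] at hIJ

namespace MetallicOrder

variable {n : ℕ} {I J : Ideal (MetallicOrder n)} {a b k : ℤ}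

/-- The conjugate of an ideal under the nontrivial automorphism of the quadratic order. -/
def conjIdeal (I : Ideal (MetallicOrder n)) : Ideal (MetallicOrder n) :=
  I.map (starRingEnd (MetallicOrder n))

/-- The integer `a`, determined up to sign, is the norm of `I` in the sense that the product of `I`
with its conjugate is the principal ideal generated by `a`. -/
def HasNorm (I : Ideal (MetallicOrder n)) (a : ℤ) : Prop :=
  I * conjIdeal I = Ideal.span {(a : MetallicOrder n)}

lemma conjIdeal_mul (I J : Ideal (MetallicOrder n)) :
    conjIdeal (I * J) = conjIdeal I * conjIdeal J :=
  Ideal.map_mul _ _ _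

lemma conjIdeal_conjIdeal (I : Ideal (MetallicOrder n)) : conjIdeal (conjIdeal I) = I := by
  have star_star : (starRingEnd (MetallicOrder n)).comp (starRingEnd _) = RingHom.id _ :=
    RingHom.ext fun z ↦ starRingEnd_self_apply z
  rw [conjIdeal, conjIdeal, Ideal.map_map, star_star, Ideal.map_id]

lemma conjIdeal_latticeIdeal (n : ℕ) (a k : ℤ) :
    conjIdeal (latticeIdeal n a k) = latticeIdeal n a (-k - n) := by
  have star_eq : star (⟨k, 1⟩ : MetallicOrder n) = -⟨-k - n, 1⟩ := by ext <;> simp; ring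
  rw [conjIdeal, latticeIdeal, latticeIdeal_eq_sup, Ideal.map_span, Set.image_pair,
    starRingEnd_apply, starRingEnd_apply, star_intCast, star_eq, Ideal.span_insert,
    Ideal.span_singleton_neg]

lemma hasNorm_span_singleton (z : MetallicOrder n) :
    HasNorm (Ideal.span {z}) (QuadraticAlgebra.norm z) := by
  rw [HasNorm, conjIdeal, Ideal.map_span, Set.image_singleton, starRingEnd_apply,
    Ideal.span_singleton_mul_span_singleton, intCast_norm]

lemma hasNorm_latticeIdeal (ha : IsCoprime a (n ^ 2 + 4)) (h : a ∣ k ^ 2 + n * k - 1) :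
    HasNorm (latticeIdeal n a k) a := by
  obtain ⟨c, hc⟩ := id h
  have conj_mul : (⟨k, 1⟩ * ⟨-k - n, 1⟩ : MetallicOrder n) = a * -c := by
    ext
    · simp; linear_combination -hc
    · simp; ring
  rw [HasNorm, conjIdeal_latticeIdeal, latticeIdeal, latticeIdeal, Ideal.span_pair_mul_span_pair,
    conj_mul]
  refine le_antisymm (Ideal.span_le.mpr ?_) ((Ideal.span_singleton_le_iff_mem _).mpr ?_)
  · rintro _ (rfl | rfl | rfl | rfl) <;> rw [SetLike.mem_coe, Ideal.mem_span_singleton]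
    exacts [dvd_mul_right _ _, dvd_mul_right _ _, dvd_mul_left _ _, dvd_mul_right _ _]
  · have coprime_deriv : IsCoprime a (2 * k + n) := by
      refine (IsCoprime.pow_right_iff (m := 2) two_pos).mp ?_
      rw [show (2 * k + n) ^ 2 = (n ^ 2 + 4) + a * (4 * c) by linear_combination 4 * hc]
      exact ha.add_mul_left_right _
    obtain ⟨u, v, huv⟩ := coprime_deriv
    have a_eq : (a : MetallicOrder n) =
        u * (a * a) + v * (⟨k, 1⟩ * a - a * ⟨-k - n, 1⟩) := by
      ext
      · simp; linear_combination -a * huv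
      · simp
    refine (congrArg (· ∈ Ideal.span _) a_eq).mpr ?_
    refine add_mem (Ideal.mul_mem_left _ _ (Ideal.subset_span ?_))
      (Ideal.mul_mem_left _ _ (sub_mem (Ideal.subset_span ?_) (Ideal.subset_span ?_))) <;> simp

namespace HasNorm

lemma mul (hI : HasNorm I a) (hJ : HasNorm J b) : HasNorm (I * J) (a * b) := by
  rw [HasNorm, conjIdeal_mul, mul_mul_mul_comm, hI, hJ, Ideal.span_singleton_mul_span_singleton,
    Int.cast_mul]

lemma conjIdeal (hI : HasNorm I a) : HasNorm (conjIdeal I) a := by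
  rw [HasNorm, conjIdeal_conjIdeal, mul_comm, hI]

lemma abs_eq (ha : HasNorm I a) (hb : HasNorm I b) : |a| = |b| := by
  have dvd_of_span_le {x y : ℤ} (h : Ideal.span {(y : MetallicOrder n)} ≤ Ideal.span {↑x}) :
      x ∣ y := by
    obtain ⟨z, hz⟩ := Ideal.span_singleton_le_span_singleton.mp h
    exact ⟨z.re, by simpa using congrArg QuadraticAlgebra.re hz⟩
  have span_eq := Eq.trans (Eq.symm ha) hb
  exact abs_eq_abs.mpr (Int.natAbs_eq_natAbs_iff.mp
    (Int.natAbs_eq_of_dvd_dvd (dvd_of_span_le span_eq.ge) (dvd_of_span_le span_eq.le)))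

lemma exists_span_singleton_mul_eq [NeZero n] (ha : HasNorm I a) (hb : HasNorm J b)
    (hIJ : IdealSimilar I J) :
    ∃ γ : MetallicOrder n, |QuadraticAlgebra.norm γ| = |a * b| ∧ γ ∈ MetallicOrder.conjIdeal J ∧
      Ideal.span {γ} * J = Ideal.span {(b : MetallicOrder n)} * I := by
  obtain ⟨α, β, hα, -, h⟩ := hIJ
  have span_mul : Ideal.span {α} * (I * MetallicOrder.conjIdeal J) = Ideal.span {β * b} := by
    rw [← mul_assoc, h, mul_assoc, hb, Ideal.span_singleton_mul_span_singleton]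
  have mem : β * b ∈ Ideal.span {α} * (I * MetallicOrder.conjIdeal J) := by
    rw [span_mul]
    exact Ideal.mem_span_singleton_self _
  obtain ⟨γ, hγ, hαγ⟩ := Ideal.mem_span_singleton_mul.mp mem
  rw [← hαγ, ← Ideal.span_singleton_mul_span_singleton, Ideal.span_singleton_mul_right_inj hα]
    at span_mul
  have hasNorm_span : HasNorm (Ideal.span {γ}) (a * b) := by
    rw [← span_mul]
    exact ha.mul hb.conjIdeal
  refine ⟨γ, (hasNorm_span_singleton γ).abs_eq hasNorm_span, Ideal.mul_le_right hγ, ?_⟩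
  rw [← span_mul, mul_assoc, mul_comm (MetallicOrder.conjIdeal J), hb, mul_comm]

end HasNorm

end MetallicOrder

end ConjugateIdeal

/-! ### Generators and lattice points in boxes -/

section BoundedGenerators

lemma card_Icc_ceil_floor_le {x y : ℝ} (h : x ≤ y + 1) :
    ((Finset.Icc ⌈x⌉ ⌊y⌋).card : ℝ) ≤ y - x + 1 := by
  rw [Int.card_Icc]
  rcases le_total (⌊y⌋ + 1 - ⌈x⌉) 0 with hle | hle
  · rw [Int.toNat_of_nonpos hle, Nat.cast_zero]
    linarith
  · rw [← Int.cast_natCast, Int.toNat_of_nonneg hle]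
    push_cast
    linarith [Int.floor_le y, Int.le_ceil x]

lemma exists_dyadic_le {x y T : ℝ} {m : ℕ} (hy : 0 ≤ y) (hyx : y ≤ x) (hxy : x < m ^ 2 * y)
    (hT : x * y ≤ T) : ∃ i ≤ Nat.log 2 m, x ≤ 2 ^ (i + 1) * √T ∧ y ≤ √T / 2 ^ i := by
  replace hy : 0 < y := by
    refine hy.lt_of_ne' fun h ↦ ?_
    rw [h, mul_zero] at hxy
    linarith
  obtain ⟨i, hi, hi'⟩ := exists_nat_pow_near ((one_le_div hy).mpr hyx) (by norm_num : (1 : ℝ) < 4)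
  rw [le_div_iff₀ hy, show (4 : ℝ) = 2 ^ 2 by norm_num, pow_right_comm] at hi
  rw [div_lt_iff₀ hy, show (4 : ℝ) = 2 ^ 2 by norm_num, pow_right_comm] at hi'
  have two_pow_le : 2 ^ i ≤ m := by
    have : ((2 : ℝ) ^ i) ^ 2 < m ^ 2 := lt_of_mul_lt_mul_right (hi.trans_lt hxy) hy.le
    exact_mod_cast (lt_of_pow_lt_pow_left₀ 2 m.cast_nonneg this).le
  refine ⟨i, Nat.le_log_of_pow_le one_lt_two two_pow_le, ?_, ?_⟩
  · rw [← div_le_iff₀' (by positivity)]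
    refine Real.le_sqrt_of_sq_le ?_
    rw [div_pow, div_le_iff₀ (by positivity)]
    nlinarith
  · rw [le_div_iff₀ (by positivity)]
    refine Real.le_sqrt_of_sq_le ?_
    nlinarith

lemma map_val_zpow {M K F : Type*} [Monoid M] [DivisionMonoid K] [FunLike F M K]
    [MonoidHomClass F M K] (f : F) (u : Mˣ) (j : ℤ) : f ((u ^ j : Mˣ) : M) = f u ^ j := by
  have := congrArg Units.val (map_zpow (Units.map (f : M →* K)) u j)
  rwa [Units.val_zpow_eq_zpow_val, Units.coe_map, Units.coe_map] at this

namespace MetallicOrder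

variable {n : ℕ}

/-- The unit of the metallic order that `embed` sends to the metallic mean. -/
def fundamentalUnit (n : ℕ) : (MetallicOrder n)ˣ where
  val := ⟨0, 1⟩
  inv := ⟨-n, 1⟩
  val_inv := by ext <;> simp [QuadraticAlgebra.re_one, QuadraticAlgebra.im_one]
  inv_val := by ext <;> simp [QuadraticAlgebra.re_one, QuadraticAlgebra.im_one]

lemma embed_fundamentalUnit (n : ℕ) :
    embed (fundamentalUnit n : MetallicOrder n) = metallicMean n := by
  simp [embed_apply, fundamentalUnit]

lemma abs_embedConj_fundamentalUnit (n : ℕ) :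
    |embedConj (fundamentalUnit n : MetallicOrder n)| = (metallicMean n)⁻¹ := by
  refine eq_inv_of_mul_eq_one_right ?_
  rw [← abs_of_pos (metallicMean_pos n), ← embed_fundamentalUnit, ← abs_mul, embedConj_apply,
    embed_fundamentalUnit]
  simp [fundamentalUnit, metallicMean_mul_metallicConj]

lemma exists_span_singleton_eq [NeZero n] {γ : MetallicOrder n} (hγ : γ ≠ 0) :
    ∃ γ' : MetallicOrder n, Ideal.span {γ'} = Ideal.span {γ} ∧
      |embedConj γ'| ≤ |embed γ'| ∧ |embed γ'| < metallicMean n ^ 2 * |embedConj γ'| := by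
  have norm_ne_zero : embed γ * embedConj γ ≠ 0 := by
    rw [embed_mul_embedConj]
    exact_mod_cast norm_eq_zero_iff.not.mpr hγ
  have embed_pos : 0 < |embed γ| := abs_pos.mpr (left_ne_zero_of_mul norm_ne_zero)
  have embedConj_pos : 0 < |embedConj γ| := abs_pos.mpr (right_ne_zero_of_mul norm_ne_zero)
  obtain ⟨j, hj, hj'⟩ := exists_mem_Ico_zpow (div_pos embed_pos embedConj_pos)
    (one_lt_pow₀ (one_lt_metallicMean n) two_ne_zero)
  have zpow_pos : 0 < metallicMean n ^ j := zpow_pos (metallicMean_pos n) j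
  rw [zpow_add_one₀ (pow_pos (metallicMean_pos n) 2).ne', sq, mul_zpow,
    div_lt_iff₀ embedConj_pos] at hj'
  rw [sq, mul_zpow, le_div_iff₀ embedConj_pos] at hj
  refine ⟨((fundamentalUnit n ^ (-j) : (MetallicOrder n)ˣ) : MetallicOrder n) * γ,
    Ideal.span_singleton_mul_left_unit (Units.isUnit _) _, ?_⟩
  rw [map_mul, map_mul, abs_mul, abs_mul, map_val_zpow, map_val_zpow, embed_fundamentalUnit,
    abs_zpow, abs_embedConj_fundamentalUnit, inv_zpow, zpow_neg, inv_inv,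
    abs_of_pos (inv_pos.mpr zpow_pos), le_inv_mul_iff₀ zpow_pos,
    inv_mul_lt_iff₀ zpow_pos]
  exact ⟨by linarith, by linarith⟩

lemma abs_im_mul_sqrtDisc_le (z : MetallicOrder n) :
    |(z.im : ℝ)| * sqrtDisc n ≤ |embed z| + |embedConj z| := by
  have sub_eq : embed z - embedConj z = z.im * sqrtDisc n := by
    rw [embed_apply, embedConj_apply, ← metallicMean_sub_metallicConj]
    ring
  rw [← abs_of_pos (sqrtDisc_pos n), ← abs_mul, ← sub_eq]
  exact abs_sub _ _

-- The elements have coordinates `x = q * j + l * y` and `y`, where `y` and, for given `y`, `j` run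
-- through the integers of the intervals cut out by the two embeddings.
lemma exists_finset_box {q : ℤ} (hq : 0 < q) (l : ℤ) {U V : ℝ} (hV : 0 ≤ V) (hVU : V ≤ U) :
    ∃ S : Finset (MetallicOrder n),
      (∀ z : MetallicOrder n, q ∣ z.re - l * z.im → |embed z| ≤ U → |embedConj z| ≤ V → z ∈ S) ∧
      (S.card : ℝ) ≤ (4 * U / sqrtDisc n + 1) * (2 * V / q + 1) := by
  classical
  have hr := sqrtDisc_pos n
  have hq' : (0 : ℝ) < q := by exact_mod_cast hq
  set R := 2 * U / sqrtDisc n with hR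
  have hR0 : 0 ≤ R := div_nonneg (by linarith) hr.le
  let lower (y : ℤ) : ℝ := (-V - y * (l + metallicConj n)) / q
  let params := (Finset.Icc ⌈-R⌉ ⌊R⌋).sigma
    fun y ↦ Finset.Icc ⌈lower y⌉ ⌊lower y + 2 * V / q⌋
  refine ⟨params.image fun t ↦ ⟨q * t.2 + l * t.1, t.1⟩, ?_, ?_⟩
  · rintro ⟨x, y⟩ ⟨j, hj⟩ hU hV'
    have x_eq : x = q * j + l * y := by linarith
    subst x_eq
    have abs_y_le : |(y : ℝ)| ≤ R := by
      rw [hR, le_div_iff₀ hr]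
      exact (abs_im_mul_sqrtDisc_le ⟨q * j + l * y, y⟩).trans (by linarith)
    rw [embedConj_apply, abs_le] at hV'
    push_cast at hV'
    refine Finset.mem_image.mpr ⟨⟨y, j⟩, Finset.mem_sigma.mpr ⟨?_, ?_⟩, rfl⟩ <;>
      rw [Finset.mem_Icc, Int.ceil_le, Int.le_floor]
    · exact abs_le.mp abs_y_le
    · rw [← add_div, div_le_iff₀ hq', le_div_iff₀ hq']
      exact ⟨by linarith, by linarith⟩
  · have card_fibre_le (y : ℤ) :
        ((Finset.Icc ⌈lower y⌉ ⌊lower y + 2 * V / q⌋).card : ℝ) ≤ 2 * V / q + 1 := by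
      have : 0 ≤ 2 * V / q := by positivity
      refine (card_Icc_ceil_floor_le (by linarith)).trans_eq (by ring)
    calc ((params.image fun t ↦ (⟨q * t.2 + l * t.1, t.1⟩ : MetallicOrder n)).card : ℝ)
        ≤ params.card := by exact_mod_cast Finset.card_image_le
      _ ≤ (Finset.Icc ⌈-R⌉ ⌊R⌋).card * (2 * V / q + 1) := by
          rw [Finset.card_sigma, Nat.cast_sum, ← nsmul_eq_mul]
          exact Finset.sum_le_card_nsmul _ _ _ fun y _ ↦ card_fibre_le y
      _ ≤ (4 * U / sqrtDisc n + 1) * (2 * V / q + 1) := by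
          gcongr
          exact (card_Icc_ceil_floor_le (by linarith)).trans_eq (by rw [hR]; ring)

end MetallicOrder

end BoundedGenerators

/-! ### Counting primitive ideals of bounded norm -/

section IdealCount

namespace MetallicOrder

variable {n : ℕ} {b l : ℤ}

lemma HasNorm.exists_generator_mem_box [NeZero n] {I J : Ideal (MetallicOrder n)} {a : ℤ} {T : ℝ}
    (ha : HasNorm I a) (hb : HasNorm J b) (hIJ : IdealSimilar I J) (hab : a * b ≠ 0)
    (hT : (|a * b| : ℤ) ≤ T) :
    ∃ γ : MetallicOrder n, ∃ i ≤ Nat.log 2 (n + 1), γ ∈ MetallicOrder.conjIdeal J ∧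
      |embed γ| ≤ 2 ^ (i + 1) * √T ∧ |embedConj γ| ≤ √T / 2 ^ i ∧
      Ideal.span {γ} * J = Ideal.span {(b : MetallicOrder n)} * I := by
  obtain ⟨γ, norm_γ, γ_mem, span_mul⟩ := ha.exists_span_singleton_mul_eq hb hIJ
  have γ_ne_zero : γ ≠ 0 := norm_eq_zero_iff.not.mp fun h ↦ hab (by simpa [h, eq_comm] using norm_γ)
  obtain ⟨γ', span_eq, le, lt⟩ := exists_span_singleton_eq γ_ne_zero
  have norm_γ' : |QuadraticAlgebra.norm γ'| = |QuadraticAlgebra.norm γ| :=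
    (hasNorm_span_singleton γ').abs_eq (span_eq ▸ hasNorm_span_singleton γ)
  have embed_mul_le : |embed γ'| * |embedConj γ'| ≤ T := by
    rwa [← abs_mul, embed_mul_embedConj, ← Int.cast_abs, norm_γ', norm_γ]
  have embed_lt : |embed γ'| < ((n + 1 : ℕ) : ℝ) ^ 2 * |embedConj γ'| := by
    refine lt.trans_le ?_
    push_cast
    gcongr
    exacts [(metallicMean_pos n).le, metallicMean_le n]
  obtain ⟨i, hi, hU, hV⟩ := exists_dyadic_le (abs_nonneg _) le embed_lt embed_mul_le
  refine ⟨γ', i, hi, ?_, hU, hV, span_eq ▸ span_mul⟩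
  rw [← Ideal.span_singleton_le_iff_mem] at γ_mem ⊢
  exact span_eq.trans_le γ_mem

lemma dvd_sq_add_mul_sub_one_neg_sub (h : b ∣ l ^ 2 + n * l - 1) :
    b ∣ (-l - n) ^ 2 + n * (-l - n) - 1 := by
  rwa [show (-l - n) ^ 2 + n * (-l - n) - 1 = l ^ 2 + n * l - 1 by ring]

theorem card_similar_le_sum [NeZero n] (hb : 0 < b) (hcop : IsCoprime b (n ^ 2 + 4))
    (hl : b ∣ l ^ 2 + n * l - 1) {X : ℕ} {F : Finset (Ideal (MetallicOrder n))}
    (hF : ∀ I ∈ F, (∃ m ∈ Finset.Icc 1 X, HasNorm I m) ∧ IdealSimilar I (latticeIdeal n b l)) :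
    (F.card : ℝ) ≤ ∑ i ∈ Finset.range (Nat.log 2 (n + 1) + 1),
      (4 * (2 ^ (i + 1) * √(X * b)) / sqrtDisc n + 1) * (2 * (√(X * b) / 2 ^ i) / b + 1) := by
  classical
  have box_le (i : ℕ) : √(X * b) / 2 ^ i ≤ 2 ^ (i + 1) * √(X * b : ℝ) :=
    (div_le_self (Real.sqrt_nonneg _) (one_le_pow₀ one_le_two)).trans
      (le_mul_of_one_le_left (Real.sqrt_nonneg _) (one_le_pow₀ one_le_two))
  choose S hS hcard using fun i ↦
    exists_finset_box (n := n) hb (-l - n) (by positivity) (box_le i)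
  have exists_generator : ∀ I ∈ F, ∃ γ ∈ (Finset.range (Nat.log 2 (n + 1) + 1)).biUnion S,
      Ideal.span {γ} * latticeIdeal n b l = Ideal.span {(b : MetallicOrder n)} * I := by
    intro I hI
    obtain ⟨⟨m, hm, hIm⟩, hsim⟩ := hF I hI
    rw [Finset.mem_Icc] at hm
    obtain ⟨γ, i, hi, γ_mem, hU, hV, span_mul⟩ := hIm.exists_generator_mem_box (T := X * b)
      (hasNorm_latticeIdeal hcop hl) hsim
      (mul_ne_zero (by exact_mod_cast (Nat.one_le_iff_ne_zero.mp hm.1)) hb.ne') (by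
        rw [abs_of_nonneg (by positivity)]
        push_cast
        gcongr
        exact_mod_cast hm.2)
    rw [conjIdeal_latticeIdeal, mem_latticeIdeal (dvd_sq_add_mul_sub_one_neg_sub hl)] at γ_mem
    exact ⟨γ, Finset.mem_biUnion.mpr ⟨i, Finset.mem_range_succ_iff.mpr hi, hS i γ γ_mem hU hV⟩,
      span_mul⟩
  choose! g g_mem span_g using exists_generator
  have g_inj : Set.InjOn g F := by
    intro I hI I' hI' h
    have := span_g I hI
    rw [h, span_g I' hI', Ideal.span_singleton_mul_right_inj (by exact_mod_cast hb.ne')] at this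
    exact this.symm
  calc (F.card : ℝ) ≤ ((Finset.range (Nat.log 2 (n + 1) + 1)).biUnion S).card := by
        exact_mod_cast Finset.card_le_card_of_injOn g g_mem g_inj
    _ ≤ ∑ i ∈ Finset.range (Nat.log 2 (n + 1) + 1), ((S i).card : ℝ) := by
        exact_mod_cast Finset.card_biUnion_le
    _ ≤ _ := Finset.sum_le_sum fun i _ ↦ hcard i

theorem exists_card_similar_le [NeZero n] (hb : 0 < b) (hcop : IsCoprime b (n ^ 2 + 4))
    (hl : b ∣ l ^ 2 + n * l - 1) :
    ∃ B : ℝ, 0 ≤ B ∧ ∀ X : ℕ, 1 ≤ X → ∀ F : Finset (Ideal (MetallicOrder n)),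
      (∀ I ∈ F, (∃ m ∈ Finset.Icc 1 X, HasNorm I m) ∧ IdealSimilar I (latticeIdeal n b l)) →
      (F.card : ℝ) ≤ (Nat.log 2 (n + 1) + 1) * (16 / sqrtDisc n) * X + B * √X := by
  have hr := sqrtDisc_pos n
  have : (0 : ℝ) < b := by exact_mod_cast hb
  refine ⟨∑ i ∈ Finset.range (Nat.log 2 (n + 1) + 1),
    (4 * (2 ^ (i + 1) * √b) / sqrtDisc n + 2 * (√b / 2 ^ i) / b + 1), by positivity,
    fun X hX F hF ↦ (card_similar_le_sum hb hcop hl hF).trans ?_⟩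
  have one_le_sqrt : 1 ≤ √(X : ℝ) := Real.one_le_sqrt.mpr (by exact_mod_cast hX)
  have term_le (i : ℕ) :
      (4 * (2 ^ (i + 1) * √(X * b)) / sqrtDisc n + 1) * (2 * (√(X * b) / 2 ^ i) / b + 1) ≤
        16 / sqrtDisc n * X +
          (4 * (2 ^ (i + 1) * √b) / sqrtDisc n + 2 * (√b / 2 ^ i) / b + 1) * √X := by
    have leading_term : 4 * (2 ^ (i + 1) * √(X * b)) / sqrtDisc n * (2 * (√(X * b) / 2 ^ i) / b) =
        16 / sqrtDisc n * X := by
      have sq_sqrt : √(X * b : ℝ) * √(X * b) = X * b := Real.mul_self_sqrt (by positivity)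
      rw [pow_succ]
      field_simp
      linear_combination 16 * sq_sqrt
    rw [add_mul, mul_add, leading_term, Real.sqrt_mul X.cast_nonneg]
    have : 4 * (2 ^ (i + 1) * (√X * √b)) / sqrtDisc n =
        4 * (2 ^ (i + 1) * √b) / sqrtDisc n * √X := by ring
    have : 2 * (√X * √b / 2 ^ i) / b = 2 * (√b / 2 ^ i) / b * √X := by ring
    linarith
  calc _ ≤ _ := Finset.sum_le_sum fun i _ ↦ term_le i
    _ = _ := by
      rw [Finset.sum_add_distrib, Finset.sum_const, Finset.card_range, nsmul_eq_mul,
        Finset.sum_mul]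
      push_cast
      ring

end MetallicOrder

end IdealCount

/-! ### Primitive ideals and roots of `x ^ 2 + n * x - 1` -/

section PrimitiveIdeal

/-- The residues `x` modulo `m` for which `m` divides the norm `x ^ 2 + n * x - 1` of the element
`⟨x, 1⟩` of the metallic order. -/
def metallicRoots (n m : ℕ) : Set (ZMod m) := {x | x ^ 2 + n * x - 1 = 0}

lemma ncard_metallicRoots_mul (n : ℕ) {a b : ℕ} (h : a.Coprime b) :
    (metallicRoots n (a * b)).ncard = (metallicRoots n a).ncard * (metallicRoots n b).ncard := by
  have preimage_eq : ZMod.chineseRemainder h ⁻¹' (metallicRoots n a ×ˢ metallicRoots n b) =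
      metallicRoots n (a * b) := by
    ext x
    have map_poly : ZMod.chineseRemainder h (x ^ 2 + n * x - 1) =
        ZMod.chineseRemainder h x ^ 2 + n * ZMod.chineseRemainder h x - 1 := by simp
    change (ZMod.chineseRemainder h x).1 ^ 2 + n * (ZMod.chineseRemainder h x).1 - 1 = 0 ∧
      (ZMod.chineseRemainder h x).2 ^ 2 + n * (ZMod.chineseRemainder h x).2 - 1 = 0 ↔
        x ^ 2 + n * x - 1 = 0
    rw [← (ZMod.chineseRemainder h).map_eq_zero_iff (x := _ - _), map_poly, Prod.ext_iff]
    rfl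
  rw [← preimage_eq, ← Set.ncard_prod]
  exact Set.ncard_preimage_of_injective_subset_range (ZMod.chineseRemainder h).injective
    (by simp [(ZMod.chineseRemainder h).surjective.range_eq])

namespace MetallicOrder

variable {n m : ℕ}

/-- The primitive ideals of norm `m`, that is, those not divisible by an integer other than `±1`, if
`m` is prime to the discriminant, and the empty set otherwise. -/
def primitiveIdeals (n m : ℕ) : Set (Ideal (MetallicOrder n)) :=
  {I | m.Coprime (n ^ 2 + 4) ∧ ∃ k : ℤ, (m : ℤ) ∣ k ^ 2 + n * k - 1 ∧ I = latticeIdeal n m k}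

lemma intCast_mem_metallicRoots {k : ℤ} :
    (k : ZMod m) ∈ metallicRoots n m ↔ (m : ℤ) ∣ k ^ 2 + n * k - 1 := by
  rw [← ZMod.intCast_zmod_eq_zero_iff_dvd]
  push_cast
  rfl

lemma ne_zero_of_coprime_sq_add_four (hm : m.Coprime (n ^ 2 + 4)) : m ≠ 0 := by
  rintro rfl
  simp at hm

lemma hasNorm_of_mem_primitiveIdeals {I : Ideal (MetallicOrder n)} (hI : I ∈ primitiveIdeals n m) :
    HasNorm I m := by
  obtain ⟨hm, k, hk, rfl⟩ := hI
  exact hasNorm_latticeIdeal (by exact_mod_cast Nat.isCoprime_iff_coprime.mpr hm) hk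

lemma primitiveIdeals_eq_image (hm : m.Coprime (n ^ 2 + 4)) :
    primitiveIdeals n m = (fun x : ZMod m ↦ latticeIdeal n m x.cast) '' metallicRoots n m := by
  ext I
  constructor
  · rintro ⟨-, k, hk, rfl⟩
    refine ⟨k, intCast_mem_metallicRoots.mpr hk, ?_⟩
    obtain ⟨j, hj⟩ := (ZMod.intCast_eq_intCast_iff_dvd_sub k ((k : ZMod m).cast : ℤ) m).mp
      (ZMod.intCast_zmod_cast _).symm
    rw [← latticeIdeal_add_mul_left n m k j, ← hj, add_sub_cancel]
  · rintro ⟨x, hx, rfl⟩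
    rw [← ZMod.intCast_zmod_cast x] at hx
    exact ⟨hm, _, intCast_mem_metallicRoots.mp hx, rfl⟩

lemma ncard_primitiveIdeals (hm : m.Coprime (n ^ 2 + 4)) :
    (primitiveIdeals n m).ncard = (metallicRoots n m).ncard := by
  rw [primitiveIdeals_eq_image hm]
  refine Set.InjOn.ncard_image fun x hx y hy hxy ↦ ?_
  rw [← ZMod.intCast_zmod_cast x] at hx ⊢
  rw [← ZMod.intCast_zmod_cast y] at hy ⊢
  have gen_mem : (⟨x.cast, 1⟩ : MetallicOrder n) ∈ latticeIdeal n m y.cast :=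
    hxy ▸ Ideal.subset_span (by simp)
  rw [mem_latticeIdeal (intCast_mem_metallicRoots.mp hy), mul_one] at gen_mem
  exact ((ZMod.intCast_eq_intCast_iff_dvd_sub _ _ _).mpr gen_mem).symm

lemma finite_primitiveIdeals (n m : ℕ) : (primitiveIdeals n m).Finite := by
  by_cases hm : m.Coprime (n ^ 2 + 4)
  · have : NeZero m := ⟨ne_zero_of_coprime_sq_add_four hm⟩
    rw [primitiveIdeals_eq_image hm]
    exact (Set.toFinite _).image _
  · exact Set.finite_empty.subset fun I hI ↦ hm hI.1

lemma disjoint_primitiveIdeals {a b : ℕ} (hab : a ≠ b) :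
    Disjoint (primitiveIdeals n a) (primitiveIdeals n b) := by
  refine Set.disjoint_left.mpr fun I ha hb ↦ hab ?_
  simpa using (hasNorm_of_mem_primitiveIdeals ha).abs_eq (hasNorm_of_mem_primitiveIdeals hb)

lemma ncard_primitiveIdeals_mul {a b : ℕ} (h : a.Coprime b) :
    (primitiveIdeals n (a * b)).ncard =
      (primitiveIdeals n a).ncard * (primitiveIdeals n b).ncard := by
  have ncard_eq_zero {c : ℕ} (hc : ¬ c.Coprime (n ^ 2 + 4)) : (primitiveIdeals n c).ncard = 0 := by
    rw [Set.ncard_eq_zero (finite_primitiveIdeals n c)]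
    exact Set.eq_empty_of_forall_notMem fun I hI ↦ hc hI.1
  by_cases hab : (a * b).Coprime (n ^ 2 + 4)
  · obtain ⟨ha, hb⟩ := Nat.coprime_mul_iff_left.mp hab
    rw [ncard_primitiveIdeals ha, ncard_primitiveIdeals hb, ncard_primitiveIdeals hab,
      ncard_metallicRoots_mul n h]
  · rw [ncard_eq_zero hab, eq_comm, Nat.mul_eq_zero]
    rw [Nat.coprime_mul_iff_left, not_and_or] at hab
    exact hab.imp ncard_eq_zero ncard_eq_zero

lemma exists_card_class_le [NeZero n] {ι : Type*} {cls : Ideal (MetallicOrder n) → ι}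
    (hcls : ∀ a b, ∀ I ∈ primitiveIdeals n a, ∀ J ∈ primitiveIdeals n b,
      cls I = cls J → IdealSimilar I J) (c : ι) :
    ∃ B : ℝ, 0 ≤ B ∧ ∀ X : ℕ, 1 ≤ X → ∀ F : Finset (Ideal (MetallicOrder n)),
      (∀ I ∈ F, (∃ m ∈ Finset.Icc 1 X, I ∈ primitiveIdeals n m) ∧ cls I = c) →
      (F.card : ℝ) ≤ (Nat.log 2 (n + 1) + 1) * (16 / sqrtDisc n) * X + B * √X := by
  by_cases h : ∃ b ≥ 1, ∃ J ∈ primitiveIdeals n b, cls J = c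
  · obtain ⟨b, hb, J, hJ, rfl⟩ := h
    obtain ⟨hcop, l, hl, rfl⟩ := id hJ
    obtain ⟨B, hB, hF⟩ := exists_card_similar_le (by exact_mod_cast hb)
      (by exact_mod_cast Nat.isCoprime_iff_coprime.mpr hcop) hl
    refine ⟨B, hB, fun X hX F h ↦ hF X hX F fun I hI ↦ ?_⟩
    obtain ⟨⟨m, hm, hIm⟩, hIJ⟩ := h I hI
    exact ⟨⟨m, hm, hasNorm_of_mem_primitiveIdeals hIm⟩, hcls _ _ I hIm _ hJ hIJ⟩
  · refine ⟨0, le_rfl, fun X hX F hF ↦ ?_⟩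
    have F_eq_empty : F = ∅ := Finset.eq_empty_of_forall_notMem fun I hI ↦ by
      obtain ⟨⟨m, hm, hIm⟩, hc⟩ := hF I hI
      exact h ⟨m, (Finset.mem_Icc.mp hm).1, I, hIm, hc⟩
    have := sqrtDisc_pos n
    rw [F_eq_empty, Finset.card_empty, Nat.cast_zero]
    positivity

theorem exists_sum_ncard_primitiveIdeals_le (n : ℕ) [NeZero n] :
    ∃ B : ℝ, 0 ≤ B ∧ ∀ X : ℕ, 1 ≤ X →
      ((∑ m ∈ Finset.Icc 1 X, (primitiveIdeals n m).ncard : ℕ) : ℝ) ≤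
        classNumber ((n : ℤ) ^ 2 + 4) * ((Nat.log 2 (n + 1) + 1) * (16 / sqrtDisc n)) * X +
          B * √X := by
  classical
  have := Fintype.ofFinite (ClassGroup (MetallicOrder n))
  obtain ⟨cls, hcls⟩ := exists_classGroup_map (MetallicOrder n)
  have isUnit_of_mem {m : ℕ} {I : Ideal (MetallicOrder n)} (hI : I ∈ primitiveIdeals n m) :
      IsUnit (I : FractionalIdeal (nonZeroDivisors (MetallicOrder n))
        (FractionRing (MetallicOrder n))) :=
    isUnit_coeIdeal_of_mul_eq_span_singleton
      (by exact_mod_cast ne_zero_of_coprime_sq_add_four hI.1) (hasNorm_of_mem_primitiveIdeals hI)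
  choose B hB hcard using exists_card_class_le fun a b I hI J hJ ↦
    hcls I J (isUnit_of_mem hI) (isUnit_of_mem hJ)
  refine ⟨∑ c, B c, Finset.sum_nonneg fun c _ ↦ hB c, fun X hX ↦ ?_⟩
  set P := (Finset.Icc 1 X).biUnion fun m ↦ (finite_primitiveIdeals n m).toFinset with hP
  have sum_eq : ∑ m ∈ Finset.Icc 1 X, (primitiveIdeals n m).ncard = P.card := by
    rw [hP, Finset.card_biUnion]
    · exact Finset.sum_congr rfl fun m _ ↦ Set.ncard_eq_toFinset_card _ _
    · exact fun a _ b _ hab ↦ Set.Finite.disjoint_toFinset.mpr (disjoint_primitiveIdeals hab)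
  calc ((∑ m ∈ Finset.Icc 1 X, (primitiveIdeals n m).ncard : ℕ) : ℝ)
      = ∑ c, ((P.filter fun I ↦ cls I = c).card : ℝ) := by
        rw [sum_eq, Finset.card_eq_sum_card_fiberwise (f := cls) (t := Finset.univ)
          fun _ _ ↦ Finset.mem_coe.mpr (Finset.mem_univ _), Nat.cast_sum]
    _ ≤ ∑ c, ((Nat.log 2 (n + 1) + 1) * (16 / sqrtDisc n) * X + B c * √X) := by
        refine Finset.sum_le_sum fun c _ ↦ hcard c X hX _ fun I hI ↦ ?_
        simpa [hP] using hI
    _ = _ := by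
        rw [Finset.sum_add_distrib, Finset.sum_const, Finset.card_univ, nsmul_eq_mul,
          Finset.sum_mul, MetallicOrder.classNumber_eq_card, Nat.card_eq_fintype_card, ← mul_assoc]

end MetallicOrder

end PrimitiveIdeal

/-! ### The Jacobi character and primitive ideals of squarefree norm -/

section JacobiCharacter

open DirichletCharacter (zetaMul isMultiplicative_zetaMul)
open scoped NumberTheorySymbols

/-- The Jacobi symbol `J(D | b)` for odd `b`, extended by `0` to even `b`. -/
def jacobiValue (D b : ℕ) : ℤ := if Odd b then J(D | b) else 0

lemma jacobiValue_mod (D b : ℕ) : jacobiValue D (b % (4 * D)) = jacobiValue D b := by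
  have odd_mod : Odd (b % (4 * D)) ↔ Odd b := by
    rw [Nat.odd_iff, Nat.odd_iff, Nat.mod_mod_of_dvd _ (Dvd.intro (2 * D) (by ring))]
  by_cases hb : Odd b
  · rw [jacobiValue, jacobiValue, if_pos hb, if_pos (odd_mod.mpr hb), ← jacobiSym.mod_right' D hb]
  · rw [jacobiValue, jacobiValue, if_neg hb, if_neg (odd_mod.not.mpr hb)]

lemma jacobiValue_mul (D a b : ℕ) :
    jacobiValue D (a * b) = jacobiValue D a * jacobiValue D b := by
  by_cases ha : Odd a
  · by_cases hb : Odd b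
    · simp only [jacobiValue, if_pos ha, if_pos hb, if_pos (ha.mul hb)]
      exact jacobiSym.mul_right' _ ha.pos.ne' hb.pos.ne'
    · simp [jacobiValue, Nat.odd_mul, hb]
  · simp [jacobiValue, Nat.odd_mul, ha]

lemma jacobiValue_eq_zero {D b : ℕ} (h : ¬ b.Coprime (4 * D)) : jacobiValue D b = 0 := by
  by_cases hb : Odd b
  · rw [jacobiValue, if_pos hb]
    refine jacobiSym.eq_zero_iff.mpr ⟨hb.pos.ne', fun hD ↦ h ?_⟩
    have coprime_four : b.Coprime (2 ^ 2) := (Nat.coprime_two_right.mpr hb).pow_right 2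
    exact coprime_four.mul_right (Nat.coprime_comm.mp hD)
  · rw [jacobiValue, if_neg hb]

lemma jacobiValue_trichotomy (D b : ℕ) :
    jacobiValue D b = 0 ∨ jacobiValue D b = 1 ∨ jacobiValue D b = -1 := by
  rw [jacobiValue]
  split_ifs
  · exact jacobiSym.trichotomy D b
  · exact .inl rfl

/-- The quadratic character `b ↦ J(D | b)` modulo `4 * D`. -/
def jacobiChar (D : ℕ) [NeZero D] : DirichletCharacter ℂ (4 * D) where
  toFun a := (jacobiValue D a.val : ℤ)
  map_one' := by
    rw [ZMod.val_one_eq_one_mod, jacobiValue_mod]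
    simp [jacobiValue]
  map_mul' a b := by rw [ZMod.val_mul, jacobiValue_mod, jacobiValue_mul, Int.cast_mul]
  map_nonunit' a ha := by
    rw [← ZMod.natCast_zmod_val a, ZMod.isUnit_iff_coprime] at ha
    rw [jacobiValue_eq_zero ha, Int.cast_zero]

lemma jacobiChar_natCast (D : ℕ) [NeZero D] (b : ℕ) :
    jacobiChar D (b : ZMod (4 * D)) = (jacobiValue D b : ℤ) := by
  change ((jacobiValue D (b : ZMod (4 * D)).val : ℤ) : ℂ) = _
  rw [ZMod.val_natCast, jacobiValue_mod]

lemma jacobiChar_sq (D : ℕ) [NeZero D] : jacobiChar D ^ 2 = 1 := by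
  refine MulChar.isQuadratic_iff_sq_eq_one.mp fun a ↦ ?_
  obtain ⟨b, rfl⟩ := ZMod.natCast_zmod_surjective a
  rw [jacobiChar_natCast]
  exact_mod_cast jacobiValue_trichotomy D b

namespace MetallicOrder

variable {n p : ℕ}

lemma two_le_ncard_metallicRoots [Fact p.Prime] (hp : p ≠ 2) (hpD : p.Coprime (n ^ 2 + 4))
    (hJ : J((n ^ 2 + 4 : ℕ) | p) = 1) : 2 ≤ (metallicRoots n p).ncard := by
  have two_ne_zero : (2 : ZMod p) ≠ 0 := Ring.two_ne_zero (by rwa [ZMod.ringChar_zmod_n])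
  obtain ⟨y, hy⟩ := ZMod.isSquare_of_jacobiSym_eq_one hJ
  push_cast at hy
  have y_ne_zero : y ≠ 0 := by
    rintro rfl
    rw [mul_zero] at hy
    refine (Fact.out : p.Prime).coprime_iff_not_dvd.mp hpD ?_
    rw [← ZMod.natCast_eq_zero_iff]
    exact_mod_cast hy
  have root_mem {z : ZMod p} (hz : (n : ZMod p) ^ 2 + 4 = z * z) :
      (z - n) / 2 ∈ metallicRoots n p := by
    change ((z - n) / 2) ^ 2 + n * ((z - n) / 2) - 1 = 0
    field_simp
    linear_combination -hz
  refine (Set.one_lt_ncard (Set.toFinite _)).mpr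
    ⟨_, root_mem hy, _, root_mem (hy.trans (neg_mul_neg y y).symm), fun h ↦ ?_⟩
  rw [div_left_inj' two_ne_zero, sub_left_inj, eq_neg_iff_add_eq_zero, ← two_mul] at h
  exact mul_ne_zero two_ne_zero y_ne_zero h

lemma norm_zetaMul_prime_le (hp : p.Prime) (hcop : p.Coprime (4 * (n ^ 2 + 4))) :
    ‖zetaMul (jacobiChar (n ^ 2 + 4)) p‖ ≤ (primitiveIdeals n p).ncard := by
  have := Fact.mk hp
  obtain ⟨hp4, hpD⟩ := Nat.coprime_mul_iff_right.mp hcop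
  have p_ne_two : p ≠ 2 := by
    rintro rfl
    norm_num at hp4
  have zetaMul_eq : zetaMul (jacobiChar (n ^ 2 + 4)) p = 1 + J((n ^ 2 + 4 : ℕ) | p) := by
    have := zetaMul_prime_pow_eq_sum (jacobiChar (n ^ 2 + 4)) hp 1
    rw [pow_one] at this
    rw [this, Finset.sum_range_succ, Finset.sum_range_one, pow_zero, pow_one, jacobiChar_natCast,
      jacobiValue, if_pos (hp.odd_of_ne_two p_ne_two)]
  rw [zetaMul_eq, ncard_primitiveIdeals hpD]
  rcases jacobiSym.eq_one_or_neg_one (a := (n ^ 2 + 4 : ℕ)) (b := p) hpD.symm with h | h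
  · have : (2 : ℝ) ≤ (metallicRoots n p).ncard := by
      exact_mod_cast two_le_ncard_metallicRoots p_ne_two hpD h
    rwa [h, Int.cast_one, one_add_one_eq_two, Complex.norm_ofNat]
  · rw [h]
    simp

lemma norm_zetaMul_le_ncard_primitiveIdeals (n s : ℕ) (hs : Squarefree s)
    (hcop : s.Coprime (4 * (n ^ 2 + 4))) :
    ‖zetaMul (jacobiChar (n ^ 2 + 4)) s‖ ≤ (primitiveIdeals n s).ncard := by
  induction s using induction_on_primes with
  | zero => exact absurd hs not_squarefree_zero
  | one =>
    rw [(isMultiplicative_zetaMul _).1, ncard_primitiveIdeals (Nat.coprime_one_left _), norm_one]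
    have zero_mem : 0 ∈ metallicRoots n 1 := Subsingleton.elim (α := ZMod 1) _ _
    exact Nat.one_le_cast.mpr ((Set.ncard_pos (Set.toFinite _)).mpr ⟨0, zero_mem⟩)
  | prime_mul p a hp ih =>
    obtain ⟨hpa, -, ha⟩ := Nat.squarefree_mul_iff.mp hs
    obtain ⟨hcop_p, hcop_a⟩ := Nat.coprime_mul_iff_left.mp hcop
    rw [(isMultiplicative_zetaMul _).2 hpa, norm_mul, ncard_primitiveIdeals_mul hpa, Nat.cast_mul]
    gcongr
    exacts [norm_zetaMul_prime_le hp hcop_p, ih ha hcop_a]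

end MetallicOrder

end JacobiCharacter

/-! ### Squarefree parts and partial summation -/

section SquarefreePart

open DirichletCharacter (zetaMul isMultiplicative_zetaMul)

variable {N : ℕ} (χ : DirichletCharacter ℂ N) {p : ℕ}

lemma norm_zetaMul_prime_pow_le (hp : p.Prime) (k : ℕ) : ‖zetaMul χ (p ^ k)‖ ≤ k + 1 := by
  have norm_le (j : ℕ) : ‖χ p ^ j‖ ≤ 1 := by
    rw [norm_pow]
    exact pow_le_one₀ (norm_nonneg _) (χ.norm_le_one _)
  rw [zetaMul_prime_pow_eq_sum χ hp]
  simpa using norm_sum_le_of_le (Finset.range (k + 1)) fun j _ ↦ norm_le j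

variable {χ}

lemma norm_zetaMul_prime_pow_odd_le (hχ : χ ^ 2 = 1) (hp : p.Prime) (j : ℕ) :
    ‖zetaMul χ (p ^ (2 * j + 1))‖ ≤ ‖zetaMul χ p‖ * (2 * j + 1) := by
  have zetaMul_prime : zetaMul χ p = 1 + χ p := by
    simpa [Finset.sum_range_succ] using zetaMul_prime_pow_eq_sum χ hp 1
  rw [zetaMul_prime]
  rcases MulChar.isQuadratic_iff_sq_eq_one.mpr hχ p with h | h | h
  · rw [zetaMul_prime_pow_eq_sum χ hp, h, Finset.sum_range_succ']
    simp
  · refine (norm_zetaMul_prime_pow_le χ hp _).trans ?_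
    rw [h, one_add_one_eq_two, Complex.norm_ofNat]
    push_cast
    linarith [j.cast_nonneg (α := ℝ)]
  · rw [zetaMul_prime_pow_eq_sum χ hp, h, neg_one_geom_sum, if_pos (by simp [parity_simps])]
    simp

lemma exists_norm_zetaMul_prime_pow_le (hχ : χ ^ 2 = 1) (hp : p.Prime) (k : ℕ) :
    ∃ s t : ℕ, p ^ k = s * t ^ 2 ∧ Squarefree s ∧
      ‖zetaMul χ (p ^ k)‖ ≤ ‖zetaMul χ s‖ * (t ^ 2).divisors.card := by
  have card_divisors (j : ℕ) : (((p ^ j) ^ 2).divisors.card : ℝ) = 2 * j + 1 := by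
    rw [← pow_mul, Nat.divisors_prime_pow hp, Finset.card_map, Finset.card_range]
    push_cast
    ring
  rcases Nat.even_or_odd' k with ⟨j, rfl | rfl⟩
  · refine ⟨1, p ^ j, by ring, squarefree_one, ?_⟩
    rw [card_divisors, (isMultiplicative_zetaMul χ).1, norm_one, one_mul]
    exact_mod_cast norm_zetaMul_prime_pow_le χ hp (2 * j)
  · refine ⟨p, p ^ j, by ring, hp.prime.squarefree, ?_⟩
    rw [card_divisors]
    exact norm_zetaMul_prime_pow_odd_le hχ hp j

lemma exists_norm_zetaMul_le (hχ : χ ^ 2 = 1) (m : ℕ) :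
    ∃ s t : ℕ, m = s * t ^ 2 ∧ (m ≠ 0 → Squarefree s) ∧
      ‖zetaMul χ m‖ ≤ ‖zetaMul χ s‖ * (t ^ 2).divisors.card := by
  have hmul := isMultiplicative_zetaMul χ
  induction m using Nat.recOnPosPrimePosCoprime with
  | zero => exact ⟨0, 0, by simp, by simp, by simp⟩
  | one => exact ⟨1, 1, by simp, by simp, by simp⟩
  | prime_pow p k hp _ =>
    obtain ⟨s, t, hm, hs, hle⟩ := exists_norm_zetaMul_prime_pow_le hχ hp k
    exact ⟨s, t, hm, fun _ ↦ hs, hle⟩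
  | coprime a b ha hb hab iha ihb =>
    obtain ⟨s, t, h, hs, hle⟩ := iha
    obtain ⟨s', t', h', hs', hle'⟩ := ihb
    have coprime_s : s.Coprime s' := .of_dvd (Dvd.intro _ h.symm) (Dvd.intro _ h'.symm) hab
    have coprime_t : (t ^ 2).Coprime (t' ^ 2) :=
      .of_dvd (Dvd.intro_left _ h.symm) (Dvd.intro_left _ h'.symm) hab
    refine ⟨s * s', t * t', by rw [h, h']; ring,
      fun _ ↦ (Nat.squarefree_mul coprime_s).mpr ⟨hs (by lia), hs' (by lia)⟩, ?_⟩
    rw [hmul.2 hab, hmul.2 coprime_s, mul_pow, coprime_t.card_divisors_mul, norm_mul, norm_mul,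
      Nat.cast_mul, mul_mul_mul_comm]
    gcongr

lemma summable_card_divisors_sq :
    Summable fun t : ℕ ↦ ((t ^ 2).divisors.card : ℝ) * (t : ℝ) ^ (-2 : ℝ) := by
  obtain ⟨C, -, hC⟩ := exists_card_divisors_le_rpow (ε := 1 / 4) (by norm_num)
  have summable_rpow := (Real.summable_nat_rpow (p := -(3 / 2))).mpr (by norm_num)
  refine .of_nonneg_of_le (fun t ↦ by positivity) (fun t ↦ ?_) (summable_rpow.mul_left C)
  rcases t.eq_zero_or_pos with rfl | ht
  · simp
  have ht : (0 : ℝ) < t := Nat.cast_pos.mpr ht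
  calc ((t ^ 2).divisors.card : ℝ) * (t : ℝ) ^ (-2 : ℝ)
      ≤ C * ((t ^ 2 : ℕ) : ℝ) ^ (1 / 4 : ℝ) * (t : ℝ) ^ (-2 : ℝ) := by gcongr; exact hC _
    _ = C * (t : ℝ) ^ (-(3 / 2) : ℝ) := by
      rw [Nat.cast_pow, ← Real.rpow_natCast_mul ht.le, mul_assoc, ← Real.rpow_add ht]
      norm_num

/-- The constant `∑ τ(t²) t⁻²`, which accounts for the square factors when a Dirichlet series is
compared with its restriction to squarefree integers. -/
def squareConst : ℝ := ∑' t : ℕ, ((t ^ 2).divisors.card : ℝ) * (t : ℝ) ^ (-2 : ℝ)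

lemma squareConst_pos : 0 < squareConst :=
  summable_card_divisors_sq.tsum_pos (fun t ↦ by positivity) 1 (by simp)

end SquarefreePart

section PartialSummation

open Filter MeasureTheory

variable {f : ℕ → ℝ} {K B σ : ℝ}

lemma isBigO_sum_Icc (hf : ∀ m, 0 ≤ f m) (hB : 0 ≤ B)
    (h : ∀ X : ℕ, 1 ≤ X → ∑ m ∈ Finset.Icc 1 X, f m ≤ K * X + B * √X) :
    (fun k : ℕ ↦ ∑ m ∈ Finset.Icc 1 k, f m) =O[atTop] fun k : ℕ ↦ (k : ℝ) ^ (1 : ℝ) := by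
  refine .of_bound (K + B) ?_
  filter_upwards [eventually_ge_atTop 1] with X hX
  have sqrt_le : √(X : ℝ) ≤ X := Real.sqrt_le_self_iff.mpr (.inr (Nat.one_le_cast.mpr hX))
  rw [Real.rpow_one, Real.norm_of_nonneg (Finset.sum_nonneg fun _ _ ↦ hf _),
    Real.norm_of_nonneg X.cast_nonneg, add_mul]
  exact (h X hX).trans (by gcongr)

lemma LSeries_term_ofReal (f : ℕ → ℝ) (hσ : σ ≠ 0) :
    LSeries.term (fun k ↦ (f k : ℂ)) σ = fun m ↦ ((f m * (m : ℝ) ^ (-σ) : ℝ) : ℂ) := by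
  ext m
  rcases eq_or_ne m 0 with rfl | hm
  · simp [Real.zero_rpow (neg_ne_zero.mpr hσ)]
  · rw [LSeries.term_of_ne_zero hm, Complex.ofReal_mul, Complex.ofReal_cpow m.cast_nonneg,
      div_eq_mul_inv, Complex.ofReal_neg, Complex.cpow_neg, Complex.ofReal_natCast]

lemma summable_mul_rpow_neg_of_sum_le (hf : ∀ m, 0 ≤ f m) (hB : 0 ≤ B)
    (h : ∀ X : ℕ, 1 ≤ X → ∑ m ∈ Finset.Icc 1 X, f m ≤ K * X + B * √X) (hσ : 1 < σ) :
    Summable fun m : ℕ ↦ f m * (m : ℝ) ^ (-σ) := by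
  have hsum : LSeriesSummable (fun k ↦ (f k : ℂ)) σ :=
    LSeriesSummable_of_sum_norm_bigO_and_nonneg (isBigO_sum_Icc hf hB h) hf zero_le_one hσ
  rwa [LSeriesSummable, LSeries_term_ofReal f (zero_lt_one.trans hσ).ne', Complex.summable_ofReal]
    at hsum

lemma integrableOn_integral_Ioi_one (K B : ℝ) (hσ : 1 < σ) :
    IntegrableOn (fun t : ℝ ↦ K * t ^ (-σ) + B * t ^ (-σ - 1 / 2)) (Set.Ioi 1) ∧
      ∫ t in Set.Ioi (1 : ℝ), (K * t ^ (-σ) + B * t ^ (-σ - 1 / 2)) =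
        K / (σ - 1) + B / (σ - 1 / 2) := by
  have hK : IntegrableOn (fun t : ℝ ↦ K * t ^ (-σ)) (Set.Ioi 1) :=
    (integrableOn_Ioi_rpow_of_lt (by linarith) one_pos).const_mul K
  have hB : IntegrableOn (fun t : ℝ ↦ B * t ^ (-σ - 1 / 2)) (Set.Ioi 1) :=
    (integrableOn_Ioi_rpow_of_lt (by linarith) one_pos).const_mul B
  refine ⟨hK.add hB, ?_⟩
  rw [integral_add hK hB, integral_const_mul, integral_const_mul,
    integral_Ioi_rpow_of_lt (by linarith) one_pos, integral_Ioi_rpow_of_lt (by linarith) one_pos,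
    Real.one_rpow, Real.one_rpow, show -σ + 1 = -(σ - 1) by ring, neg_div_neg_eq,
    show -σ - 1 / 2 + 1 = -(σ - 1 / 2) by ring, neg_div_neg_eq, mul_one_div, mul_one_div]

lemma norm_sum_Icc_floor_mul_cpow_le (hf : ∀ m, 0 ≤ f m) (hK : 0 ≤ K) (hB : 0 ≤ B)
    (h : ∀ X : ℕ, 1 ≤ X → ∑ m ∈ Finset.Icc 1 X, f m ≤ K * X + B * √X) {t : ℝ} (ht : 1 < t) :
    ‖(∑ k ∈ Finset.Icc 1 ⌊t⌋₊, (f k : ℂ)) * (t : ℂ) ^ (-((σ : ℂ) + 1))‖ ≤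
      K * t ^ (-σ) + B * t ^ (-σ - 1 / 2) := by
  have t_pos : 0 < t := one_pos.trans ht
  have floor_le : (⌊t⌋₊ : ℝ) ≤ t := Nat.floor_le t_pos.le
  rw [norm_mul, Complex.norm_cpow_eq_rpow_re_of_pos t_pos, ← Complex.ofReal_sum, Complex.norm_real,
    Real.norm_of_nonneg (Finset.sum_nonneg fun _ _ ↦ hf _),
    show (-((σ : ℂ) + 1)).re = -σ - 1 by simp [sub_eq_neg_add]]
  calc (∑ m ∈ Finset.Icc 1 ⌊t⌋₊, f m) * t ^ (-σ - 1)
      ≤ (K * ⌊t⌋₊ + B * √⌊t⌋₊) * t ^ (-σ - 1) := by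
        gcongr
        exact h _ ((Nat.one_le_floor_iff t).mpr ht.le)
    _ ≤ (K * t + B * √t) * t ^ (-σ - 1) := by gcongr
    _ = K * (t ^ (1 : ℝ) * t ^ (-σ - 1)) + B * (t ^ (1 / 2 : ℝ) * t ^ (-σ - 1)) := by
      rw [Real.rpow_one, Real.sqrt_eq_rpow]
      ring
    _ = K * t ^ (-σ) + B * t ^ (-σ - 1 / 2) := by
      rw [← Real.rpow_add t_pos, ← Real.rpow_add t_pos]
      ring_nf

lemma tsum_mul_rpow_neg_le_of_sum_le (hf : ∀ m, 0 ≤ f m) (hK : 0 ≤ K) (hB : 0 ≤ B)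
    (h : ∀ X : ℕ, 1 ≤ X → ∑ m ∈ Finset.Icc 1 X, f m ≤ K * X + B * √X) (hσ : 1 < σ) :
    ∑' m : ℕ, f m * (m : ℝ) ^ (-σ) ≤ σ * (K / (σ - 1) + B / (σ - 1 / 2)) := by
  have σ_pos : 0 < σ := one_pos.trans hσ
  obtain ⟨integrable, integral_eq⟩ := integrableOn_integral_Ioi_one K B hσ
  have LSeries_eq : LSeries (fun k ↦ (f k : ℂ)) σ = (∑' m : ℕ, f m * (m : ℝ) ^ (-σ) : ℝ) := by
    rw [LSeries, LSeries_term_ofReal f σ_pos.ne', Complex.ofReal_tsum]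
  rw [LSeries_eq_mul_integral_of_nonneg f zero_le_one (by exact hσ) (isBigO_sum_Icc hf hB h) hf]
    at LSeries_eq
  calc ∑' m : ℕ, f m * (m : ℝ) ^ (-σ)
      ≤ ‖((∑' m : ℕ, f m * (m : ℝ) ^ (-σ) : ℝ) : ℂ)‖ := by
        rw [Complex.norm_real]
        exact le_abs_self _
    _ = σ * ‖∫ t in Set.Ioi (1 : ℝ),
          (∑ k ∈ Finset.Icc 1 ⌊t⌋₊, (f k : ℂ)) * (t : ℂ) ^ (-((σ : ℂ) + 1))‖ := by
        rw [← LSeries_eq, norm_mul, Complex.norm_real, Real.norm_of_nonneg σ_pos.le]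
    _ ≤ σ * (K / (σ - 1) + B / (σ - 1 / 2)) := by
        rw [← integral_eq]
        gcongr
        refine norm_integral_le_of_norm_le integrable ?_
        filter_upwards [ae_restrict_mem measurableSet_Ioi] with t ht
        exact norm_sum_Icc_floor_mul_cpow_le hf hK hB h ht

end PartialSummation

/-! ### Bounding `L(1, χ)` by a mean value -/

section MeanValue

open DirichletCharacter (zetaMul LFunction LFunctionTrivChar₁)
open ArithmeticFunction (LSeries_mul' LSeriesSummable_mul)
open Filter Topology

variable {N : ℕ} {χ : DirichletCharacter ℂ N} {f : ℕ → ℝ} {K B σ : ℝ}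

lemma charCoeff_one_mul_charCoeff (χ : DirichletCharacter ℂ N) :
    charCoeff (1 : DirichletCharacter ℂ N) * charCoeff χ =
      (charCoeff (1 : DirichletCharacter ℂ N)).pmul (zetaMul χ) := by
  rw [zetaMul_eq_zeta_mul_charCoeff, charCoeff_pmul_mul, ArithmeticFunction.pmul_zeta]
  congr 1
  ext m
  rcases eq_or_ne m 0 with rfl | hm
  · simp
  · rw [ArithmeticFunction.pmul_apply, charCoeff_apply _ hm, charCoeff_apply _ hm,
      ← MulChar.mul_apply, one_mul]

lemma one_div_rpow_le_of_eq_mul_sq {m s t : ℕ} (hm : m ≠ 0) (h : m = s * t ^ 2) (hσ : 1 ≤ σ) :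
    1 / (m : ℝ) ^ σ ≤ (s : ℝ) ^ (-σ) * (t : ℝ) ^ (-2 : ℝ) := by
  have t_ne_zero : t ≠ 0 := by
    rintro rfl
    simp [h] at hm
  have one_le_t : (1 : ℝ) ≤ t := Nat.one_le_cast.mpr (Nat.one_le_iff_ne_zero.mpr t_ne_zero)
  rw [one_div, ← Real.rpow_neg m.cast_nonneg, h, Nat.cast_mul, Nat.cast_pow,
    Real.mul_rpow s.cast_nonneg (by positivity), ← Real.rpow_natCast_mul t.cast_nonneg]
  gcongr
  push_cast
  linarith

lemma norm_term_charCoeff_mul_le (hf : ∀ m, 0 ≤ f m)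
    (hle : ∀ s, Squarefree s → s.Coprime N → ‖zetaMul χ s‖ ≤ f s) (hσ : 1 ≤ σ) {m s t : ℕ}
    (h : m = s * t ^ 2) (hs : m ≠ 0 → Squarefree s)
    (hzeta : ‖zetaMul χ m‖ ≤ ‖zetaMul χ s‖ * (t ^ 2).divisors.card) :
    ‖LSeries.term ⇑(charCoeff (1 : DirichletCharacter ℂ N) * charCoeff χ) σ m‖ ≤
      f s * (s : ℝ) ^ (-σ) * ((t ^ 2).divisors.card * (t : ℝ) ^ (-2 : ℝ)) := by
  have rhs_nonneg : 0 ≤ f s * (s : ℝ) ^ (-σ) * ((t ^ 2).divisors.card * (t : ℝ) ^ (-2 : ℝ)) :=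
    mul_nonneg (mul_nonneg (hf s) (by positivity)) (by positivity)
  rcases eq_or_ne m 0 with rfl | hm
  · rwa [LSeries.term_zero, norm_zero]
  rw [LSeries.norm_term_eq, if_neg hm, charCoeff_one_mul_charCoeff, ArithmeticFunction.pmul_apply,
    charCoeff_apply _ hm, norm_mul, Complex.ofReal_re, div_eq_mul_one_div]
  by_cases hcop : m.Coprime N
  · calc ‖(1 : DirichletCharacter ℂ N) m‖ * ‖zetaMul χ m‖ * (1 / (m : ℝ) ^ σ)
        ≤ 1 * (‖zetaMul χ s‖ * (t ^ 2).divisors.card) * (1 / (m : ℝ) ^ σ) := by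
          gcongr
          exact DirichletCharacter.norm_le_one _ _
      _ ≤ 1 * (f s * (t ^ 2).divisors.card) * ((s : ℝ) ^ (-σ) * (t : ℝ) ^ (-2 : ℝ)) := by
          have := hf s
          gcongr
          · exact hle s (hs hm) (hcop.coprime_dvd_left (Dvd.intro _ h.symm))
          · exact one_div_rpow_le_of_eq_mul_sq hm h hσ
      _ = _ := by ring
  · rwa [MulChar.map_nonunit _ (by rwa [ZMod.isUnit_iff_coprime]), norm_zero, zero_mul, zero_mul]

variable [NeZero N]

lemma norm_LFunction_one_mul_LFunction_le (hχ : χ ^ 2 = 1) (hf : ∀ m, 0 ≤ f m)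
    (hle : ∀ s, Squarefree s → s.Coprime N → ‖zetaMul χ s‖ ≤ f s) (hσ : 1 < σ)
    (hsum : Summable fun m : ℕ ↦ f m * (m : ℝ) ^ (-σ)) :
    ‖LFunction (1 : DirichletCharacter ℂ N) σ * LFunction χ σ‖ ≤
      (∑' m : ℕ, f m * (m : ℝ) ^ (-σ)) * squareConst := by
  have hσ' : 1 < (σ : ℂ).re := hσ
  have summable_one := LSeriesSummable_charCoeff (1 : DirichletCharacter ℂ N) hσ'
  have summable_χ := LSeriesSummable_charCoeff χ hσ'
  have summable_norm := (LSeriesSummable_mul summable_one summable_χ).norm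
  have f_term_nonneg (m : ℕ) : 0 ≤ f m * (m : ℝ) ^ (-σ) := mul_nonneg (hf m) (by positivity)
  have card_term_nonneg (t : ℕ) : 0 ≤ ((t ^ 2).divisors.card : ℝ) * (t : ℝ) ^ (-2 : ℝ) := by
    positivity
  have summable_prod :=
    hsum.mul_of_nonneg summable_card_divisors_sq f_term_nonneg card_term_nonneg
  choose s t h hs hzeta using exists_norm_zetaMul_le hχ
  rw [← LSeries_charCoeff _ hσ', ← LSeries_charCoeff _ hσ', ← LSeries_mul' summable_one summable_χ,
    squareConst, hsum.tsum_mul_tsum summable_card_divisors_sq summable_prod]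
  refine (norm_tsum_le_tsum_norm summable_norm).trans <|
    Summable.tsum_le_tsum_of_inj (fun m ↦ (s m, t m)) (fun m m' heq ↦ ?_)
      (fun x _ ↦ mul_nonneg (f_term_nonneg x.1) (card_term_nonneg x.2))
      (fun m ↦ norm_term_charCoeff_mul_le hf hle hσ.le (h m) (hs m) (hzeta m))
      summable_norm summable_prod
  obtain ⟨hs_eq, ht_eq⟩ := Prod.ext_iff.mp heq
  rw [h m, h m']
  exact congr_arg₂ (fun a b ↦ a * b ^ 2) hs_eq ht_eq

lemma norm_LFunctionTrivChar₁_ofReal (hσ : 1 < σ) :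
    ‖LFunctionTrivChar₁ N σ‖ = (σ - 1) * ‖LFunction (1 : DirichletCharacter ℂ N) σ‖ := by
  rw [LFunctionTrivChar₁, Function.update_of_ne (by exact_mod_cast hσ.ne'), norm_mul]
  congr 1
  rw [← Complex.ofReal_one, ← Complex.ofReal_sub, Complex.norm_real,
    Real.norm_of_nonneg (sub_nonneg.mpr hσ.le)]

lemma norm_LFunctionTrivChar₁_one :
    ‖LFunctionTrivChar₁ N 1‖ = ∏ p ∈ N.primeFactors, (1 - (p : ℝ)⁻¹) := by
  rw [LFunctionTrivChar₁, Function.update_self, norm_prod]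
  refine Finset.prod_congr rfl fun p _ ↦ ?_
  rw [← Complex.ofReal_natCast, ← Complex.ofReal_inv, ← Complex.ofReal_one, ← Complex.ofReal_sub,
    Complex.norm_real, Real.norm_of_nonneg (sub_nonneg.mpr p.cast_inv_le_one)]

lemma norm_LFunctionTrivChar₁_mul_le (hχ : χ ^ 2 = 1) (hf : ∀ m, 0 ≤ f m)
    (hle : ∀ s, Squarefree s → s.Coprime N → ‖zetaMul χ s‖ ≤ f s) (hK : 0 ≤ K) (hB : 0 ≤ B)
    (h : ∀ X : ℕ, 1 ≤ X → ∑ m ∈ Finset.Icc 1 X, f m ≤ K * X + B * √X) (hσ : 1 < σ) :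
    ‖LFunctionTrivChar₁ N σ‖ * ‖LFunction χ σ‖ ≤
      σ * (K + B * (σ - 1) / (σ - 1 / 2)) * squareConst := by
  have σ_sub_one_pos : 0 < σ - 1 := sub_pos.mpr hσ
  have := squareConst_pos
  rw [norm_LFunctionTrivChar₁_ofReal hσ, mul_assoc, ← norm_mul]
  calc (σ - 1) * ‖LFunction (1 : DirichletCharacter ℂ N) σ * LFunction χ σ‖
      ≤ (σ - 1) * ((∑' m : ℕ, f m * (m : ℝ) ^ (-σ)) * squareConst) := by
        gcongr
        exact norm_LFunction_one_mul_LFunction_le hχ hf hle hσ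
          (summable_mul_rpow_neg_of_sum_le hf hB h hσ)
    _ ≤ (σ - 1) * (σ * (K / (σ - 1) + B / (σ - 1 / 2)) * squareConst) := by
        gcongr
        exact tsum_mul_rpow_neg_le_of_sum_le hf hK hB h hσ
    _ = σ * (K + B * (σ - 1) / (σ - 1 / 2)) * squareConst := by field_simp

lemma tendsto_norm_ofReal_nhdsGT {F : ℂ → ℂ} (hF : Continuous F) (a : ℝ) :
    Tendsto (fun σ : ℝ ↦ ‖F σ‖) (𝓝[>] a) (𝓝 ‖F a‖) :=
  ((hF.comp Complex.continuous_ofReal).norm.tendsto a).mono_left nhdsWithin_le_nhds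

lemma tendsto_norm_LFunctionTrivChar₁ :
    Tendsto (fun σ : ℝ ↦ ‖LFunctionTrivChar₁ N σ‖) (𝓝[>] 1) (𝓝 ‖LFunctionTrivChar₁ N 1‖) := by
  simpa using tendsto_norm_ofReal_nhdsGT
    (DirichletCharacter.differentiable_LFunctionTrivChar₁ N).continuous 1

lemma tendsto_majorant_nhdsGT_one (K B G : ℝ) :
    Tendsto (fun σ : ℝ ↦ σ * (K + B * (σ - 1) / (σ - 1 / 2)) * G) (𝓝[>] 1) (𝓝 (K * G)) := by
  have continuousAt : ContinuousAt (fun σ : ℝ ↦ σ * (K + B * (σ - 1) / (σ - 1 / 2)) * G) 1 := by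
    have : (1 : ℝ) - 1 / 2 ≠ 0 := by norm_num
    fun_prop (disch := assumption)
  simpa using continuousAt.tendsto.mono_left nhdsWithin_le_nhds

lemma ne_one_of_sum_le (hχ : χ ^ 2 = 1) (hf : ∀ m, 0 ≤ f m)
    (hle : ∀ s, Squarefree s → s.Coprime N → ‖zetaMul χ s‖ ≤ f s) (hK : 0 ≤ K) (hB : 0 ≤ B)
    (h : ∀ X : ℕ, 1 ≤ X → ∑ m ∈ Finset.Icc 1 X, f m ≤ K * X + B * √X) : χ ≠ 1 := by
  rintro rfl
  have tendsto_sub_one : Tendsto (fun σ : ℝ ↦ σ - 1) (𝓝[>] 1) (𝓝 0) := by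
    simpa using ((continuous_sub_right (1 : ℝ)).tendsto 1).mono_left nhdsWithin_le_nhds
  have sq_le : ‖LFunctionTrivChar₁ N 1‖ * ‖LFunctionTrivChar₁ N 1‖ ≤ 0 * (K * squareConst) := by
    refine le_of_tendsto_of_tendsto
      (tendsto_norm_LFunctionTrivChar₁.mul tendsto_norm_LFunctionTrivChar₁)
      (tendsto_sub_one.mul (tendsto_majorant_nhdsGT_one K B squareConst)) ?_
    filter_upwards [self_mem_nhdsWithin] with σ (hσ : 1 < σ)
    nth_rw 2 [norm_LFunctionTrivChar₁_ofReal hσ]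
    rw [mul_left_comm]
    exact mul_le_mul_of_nonneg_left (norm_LFunctionTrivChar₁_mul_le hχ hf hle hK hB h hσ)
      (sub_nonneg.mpr hσ.le)
  rw [zero_mul, ← sq] at sq_le
  exact DirichletCharacter.LFunctionTrivChar₁_apply_one_ne_zero N
    (norm_eq_zero.mp (pow_eq_zero_iff two_ne_zero |>.mp (sq_le.antisymm (sq_nonneg _))))

lemma prod_primeFactors_mul_norm_LFunction_one_le (hχ : χ ^ 2 = 1) (hf : ∀ m, 0 ≤ f m)
    (hle : ∀ s, Squarefree s → s.Coprime N → ‖zetaMul χ s‖ ≤ f s) (hK : 0 ≤ K) (hB : 0 ≤ B)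
    (h : ∀ X : ℕ, 1 ≤ X → ∑ m ∈ Finset.Icc 1 X, f m ≤ K * X + B * √X) :
    (∏ p ∈ N.primeFactors, (1 - (p : ℝ)⁻¹)) * ‖LFunction χ 1‖ ≤ K * squareConst := by
  have χ_ne_one : χ ≠ 1 := ne_one_of_sum_le hχ hf hle hK hB h
  have tendsto_LFunction : Tendsto (fun σ : ℝ ↦ ‖LFunction χ σ‖) (𝓝[>] 1) (𝓝 ‖LFunction χ 1‖) := by
    simpa using tendsto_norm_ofReal_nhdsGT
      (DirichletCharacter.differentiable_LFunction χ_ne_one).continuous 1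
  rw [← norm_LFunctionTrivChar₁_one]
  refine le_of_tendsto_of_tendsto (tendsto_norm_LFunctionTrivChar₁.mul tendsto_LFunction)
    (tendsto_majorant_nhdsGT_one K B squareConst) ?_
  filter_upwards [self_mem_nhdsWithin] with σ hσ
  exact norm_LFunctionTrivChar₁_mul_le hχ hf hle hK hB h hσ

lemma one_le_prod_primeFactors_mul_card_divisors (N : ℕ) [NeZero N] :
    1 ≤ (∏ p ∈ N.primeFactors, (1 - (p : ℝ)⁻¹)) * N.divisors.card := by
  rw [Nat.card_divisors (NeZero.ne N), Nat.cast_prod, ← Finset.prod_mul_distrib]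
  refine Finset.one_le_prod fun p hp ↦ ?_
  have prime_p := Nat.prime_of_mem_primeFactors hp
  have inv_le : (p : ℝ)⁻¹ ≤ 2⁻¹ := inv_anti₀ two_pos (Nat.ofNat_le_cast.mpr prime_p.two_le)
  have two_le : (2 : ℝ) ≤ (N.factorization p + 1 : ℕ) := by
    have := (prime_p.dvd_iff_one_le_factorization (NeZero.ne N)).mp (Nat.dvd_of_mem_primeFactors hp)
    exact_mod_cast Nat.succ_le_succ this
  nlinarith

lemma norm_LFunction_one_le_of_sum_le (hχ : χ ^ 2 = 1) (hf : ∀ m, 0 ≤ f m)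
    (hle : ∀ s, Squarefree s → s.Coprime N → ‖zetaMul χ s‖ ≤ f s) (hK : 0 ≤ K) (hB : 0 ≤ B)
    (h : ∀ X : ℕ, 1 ≤ X → ∑ m ∈ Finset.Icc 1 X, f m ≤ K * X + B * √X) :
    ‖LFunction χ 1‖ ≤ K * squareConst * N.divisors.card := by
  calc ‖LFunction χ 1‖ ≤ (∏ p ∈ N.primeFactors, (1 - (p : ℝ)⁻¹)) * N.divisors.card *
        ‖LFunction χ 1‖ :=
        le_mul_of_one_le_left (norm_nonneg _)
          (one_le_prod_primeFactors_mul_card_divisors N)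
    _ = (∏ p ∈ N.primeFactors, (1 - (p : ℝ)⁻¹)) * ‖LFunction χ 1‖ * N.divisors.card :=
        mul_right_comm _ _ _
    _ ≤ K * squareConst * N.divisors.card := by
        gcongr ?_ * _
        exact prod_primeFactors_mul_norm_LFunction_one_le hχ hf hle hK hB h

end MeanValue

/-! ### The class number of the metallic order -/

section ClassNumber

open DirichletCharacter (LFunction)
open Filter Topology

variable {ε : ℝ}

lemma jacobiChar_ne_one_and_norm_LFunction_le (n : ℕ) [NeZero n] :
    jacobiChar (n ^ 2 + 4) ≠ 1 ∧ ‖LFunction (jacobiChar (n ^ 2 + 4)) 1‖ ≤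
      classNumber ((n : ℤ) ^ 2 + 4) * ((Nat.log 2 (n + 1) + 1) * (16 / sqrtDisc n)) *
        squareConst * (4 * (n ^ 2 + 4)).divisors.card := by
  obtain ⟨B, hB, hsum⟩ := MetallicOrder.exists_sum_ncard_primitiveIdeals_le n
  have := sqrtDisc_pos n
  have hK : 0 ≤ (classNumber ((n : ℤ) ^ 2 + 4) : ℝ) *
      ((Nat.log 2 (n + 1) + 1) * (16 / sqrtDisc n)) := by positivity
  have hf (m : ℕ) : (0 : ℝ) ≤ (MetallicOrder.primitiveIdeals n m).ncard := Nat.cast_nonneg _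
  have hle := MetallicOrder.norm_zetaMul_le_ncard_primitiveIdeals n
  push_cast at hsum
  exact ⟨ne_one_of_sum_le (jacobiChar_sq _) hf hle hK hB hsum,
    norm_LFunction_one_le_of_sum_le (jacobiChar_sq _) hf hle hK hB hsum⟩

lemma rpow_le_of_le_mul_sq {m a n : ℕ} (h : m ≤ a * n ^ 2) (hε : 0 ≤ ε) :
    (m : ℝ) ^ (ε / 2) ≤ (a : ℝ) ^ (ε / 2) * (n : ℝ) ^ ε := by
  have hmono : (m : ℝ) ^ (ε / 2) ≤ (a * n ^ 2 : ℝ) ^ (ε / 2) :=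
    Real.rpow_le_rpow m.cast_nonneg (by exact_mod_cast h) (by positivity)
  rwa [Real.mul_rpow (by positivity) (by positivity), ← Real.rpow_natCast_mul n.cast_nonneg,
    Nat.cast_two, mul_div_cancel₀ _ two_ne_zero] at hmono

lemma four_mul_sq_add_four_le (n : ℕ) [NeZero n] : 4 * (n ^ 2 + 4) ≤ 20 * n ^ 2 := by
  have := Nat.one_le_pow 2 n (NeZero.pos n)
  lia

lemma exists_card_divisors_four_mul_le (hε : 0 < ε) : ∃ C : ℝ, 0 < C ∧ ∀ (n : ℕ) [NeZero n],
    ((4 * (n ^ 2 + 4)).divisors.card : ℝ) ≤ C * (n : ℝ) ^ ε := by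
  obtain ⟨C, hC, hcard⟩ := exists_card_divisors_le_rpow (half_pos hε)
  refine ⟨C * (20 : ℕ) ^ (ε / 2), by positivity, fun n _ ↦ (hcard _).trans ?_⟩
  rw [mul_assoc]
  gcongr
  exact rpow_le_of_le_mul_sq (four_mul_sq_add_four_le n) hε.le

lemma exists_log_two_le (hε : 0 < ε) : ∃ C : ℝ, 0 < C ∧ ∀ (n : ℕ) [NeZero n],
    (Nat.log 2 (n + 1) + 1 : ℝ) ≤ C * (n : ℝ) ^ ε := by
  obtain ⟨C, hC, hcard⟩ := exists_card_divisors_le_rpow (half_pos hε)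
  refine ⟨C * (2 : ℕ) ^ (ε / 2), by positivity, fun n _ ↦ ?_⟩
  have log_le := hcard (2 ^ Nat.log 2 (n + 1))
  rw [Nat.divisors_prime_pow Nat.prime_two, Finset.card_map, Finset.card_range, Nat.cast_succ]
    at log_le
  refine log_le.trans ?_
  rw [mul_assoc]
  gcongr
  refine rpow_le_of_le_mul_sq ((Nat.pow_log_le_self 2 n.succ_ne_zero).trans ?_) hε.le
  nlinarith [NeZero.one_le (n := n)]

lemma exists_norm_LFunction_jacobiChar_le (hε : 0 < ε) : ∃ A : ℝ, 0 < A ∧ ∀ (n : ℕ) [NeZero n],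
    ‖LFunction (jacobiChar (n ^ 2 + 4)) 1‖ ≤
      A * classNumber ((n : ℤ) ^ 2 + 4) * (n : ℝ) ^ (ε - 1) := by
  obtain ⟨C, hC, hcard⟩ := exists_card_divisors_four_mul_le (half_pos hε)
  obtain ⟨C', hC', hlog⟩ := exists_log_two_le (half_pos hε)
  have := squareConst_pos
  refine ⟨C' * 16 * squareConst * C, by positivity, fun n _ ↦ ?_⟩
  have n_pos : (0 : ℝ) < n := Nat.cast_pos.mpr (NeZero.pos n)
  have := sqrtDisc_pos n
  calc ‖LFunction (jacobiChar (n ^ 2 + 4)) 1‖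
      ≤ classNumber ((n : ℤ) ^ 2 + 4) * ((Nat.log 2 (n + 1) + 1) * (16 / sqrtDisc n)) *
          squareConst * (4 * (n ^ 2 + 4)).divisors.card :=
        (jacobiChar_ne_one_and_norm_LFunction_le n).2
    _ ≤ classNumber ((n : ℤ) ^ 2 + 4) * (C' * (n : ℝ) ^ (ε / 2) * (16 / n)) *
          squareConst * (C * (n : ℝ) ^ (ε / 2)) := by
        gcongr
        exacts [hlog n, (lt_sqrtDisc n).le, hcard n]
    _ = C' * 16 * squareConst * C * classNumber ((n : ℤ) ^ 2 + 4) *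
          ((n : ℝ) ^ (ε / 2) * (n : ℝ) ^ (ε / 2) / n) := by ring
    _ = C' * 16 * squareConst * C * classNumber ((n : ℤ) ^ 2 + 4) * (n : ℝ) ^ (ε - 1) := by
        rw [← Real.rpow_add n_pos, add_halves, Real.rpow_sub_one n_pos.ne']

lemma exists_le_norm_LFunction_jacobiChar (hε : 0 < ε) : ∃ c : ℝ, 0 < c ∧ ∀ (n : ℕ) [NeZero n],
    c * (n : ℝ) ^ (-ε) ≤ ‖LFunction (jacobiChar (n ^ 2 + 4)) 1‖ := by
  obtain ⟨c, hc, hsiegel⟩ := siegel (half_pos hε)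
  refine ⟨c / (20 : ℕ) ^ (ε / 2), by positivity, fun n _ ↦
    le_trans ?_ (hsiegel _ _ (jacobiChar_sq _) (jacobiChar_ne_one_and_norm_LFunction_le n).1)⟩
  have n_pos : (0 : ℝ) < n := Nat.cast_pos.mpr (NeZero.pos n)
  rw [Real.rpow_neg n_pos.le, Real.rpow_neg (Nat.cast_nonneg _), ← div_eq_mul_inv,
    ← div_eq_mul_inv, div_div]
  gcongr
  exact rpow_le_of_le_mul_sq (four_mul_sq_add_four_le n) hε.le

theorem exists_rpow_le_classNumber (hε : 0 < ε) : ∃ c : ℝ, 0 < c ∧ ∀ (n : ℕ) [NeZero n],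
    c * (n : ℝ) ^ (1 - ε) ≤ classNumber ((n : ℤ) ^ 2 + 4) := by
  obtain ⟨c, hc, hlower⟩ := exists_le_norm_LFunction_jacobiChar (half_pos hε)
  obtain ⟨A, hA, hupper⟩ := exists_norm_LFunction_jacobiChar_le (half_pos hε)
  refine ⟨c / A, by positivity, fun n _ ↦ ?_⟩
  have n_pos : (0 : ℝ) < n := Nat.cast_pos.mpr (NeZero.pos n)
  have hle := (hlower n).trans (hupper n)
  rw [div_mul_eq_mul_div, div_le_iff₀' hA]
  refine le_of_mul_le_mul_right ?_ (Real.rpow_pos_of_pos n_pos (ε / 2 - 1))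
  rw [mul_assoc, ← Real.rpow_add n_pos]
  ring_nf at hle ⊢
  exact hle

lemma tendsto_log_sub_log_div_log_of_rpow_bounds {f : ℕ → ℝ}
    (lower : ∀ ε : ℝ, 0 < ε → ∃ c : ℝ, 0 < c ∧ ∀ (n : ℕ) [NeZero n], c * (n : ℝ) ^ (1 - ε) ≤ f n)
    (upper : ∀ ε : ℝ, 0 < ε → ∃ C : ℝ, 0 < C ∧ ∀ (n : ℕ) [NeZero n], f n ≤ C * (n : ℝ) ^ (1 + ε)) :
    Tendsto (fun n : ℕ ↦ (Real.log (f n) - Real.log n) / Real.log n) atTop (𝓝 0) := by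
  refine Metric.tendsto_nhds.mpr fun δ hδ ↦ ?_
  obtain ⟨c, hc, hlower⟩ := lower (δ / 3) (by positivity)
  obtain ⟨C, hC, hupper⟩ := upper (δ / 3) (by positivity)
  have tendsto_log : Tendsto (fun n : ℕ ↦ Real.log n) atTop atTop :=
    Real.tendsto_log_atTop.comp tendsto_natCast_atTop_atTop
  filter_upwards [eventually_ge_atTop 1, tendsto_log.eventually_ge_atTop 1,
    tendsto_log.eventually_ge_atTop (Real.log C / (δ / 3)),
    tendsto_log.eventually_ge_atTop (-Real.log c / (δ / 3))] with n hn one_le_log log_C_le log_c_le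
  have : NeZero n := ⟨Nat.one_le_iff_ne_zero.mp hn⟩
  have n_pos : (0 : ℝ) < n := Nat.cast_pos.mpr hn
  have lhs_pos : 0 < c * (n : ℝ) ^ (1 - δ / 3) := by positivity
  have log_lower := Real.log_le_log lhs_pos (hlower n)
  have log_upper := Real.log_le_log (lhs_pos.trans_le (hlower n)) (hupper n)
  rw [Real.log_mul hc.ne' (by positivity), Real.log_rpow n_pos] at log_lower
  rw [Real.log_mul hC.ne' (by positivity), Real.log_rpow n_pos] at log_upper
  rw [div_le_iff₀ (by positivity)] at log_C_le log_c_le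
  have log_pos : 0 < Real.log n := one_pos.trans_le one_le_log
  have := mul_pos hδ log_pos
  rw [Real.dist_eq, sub_zero, abs_div, abs_of_pos log_pos, div_lt_iff₀ log_pos, abs_lt]
  constructor <;> linarith

end ClassNumber

/-- For `Δ⁻ₙ = n² + 4`, `log h(Δ⁻ₙ) = log n + o(log n)` as `n → ∞`. -/
theorem log_classNumber_add_asymptotic :
    Filter.Tendsto
      (fun n : ℕ =>
        (Real.log (classNumber ((n : ℤ) ^ 2 + 4)) - Real.log n) / Real.log n)
      Filter.atTop (nhds 0) :=
  tendsto_log_sub_log_div_log_of_rpow_bounds (fun _ ↦ exists_rpow_le_classNumber)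
    fun _ ↦ exists_classNumber_le_rpow
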